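/- Let f(t,x;τ,ξ) be a polynomial of degree 2 in (τ,ξ) ∈ ℝ×ℝⁿ whose coefficients are real-analytic functions of (t,x) on an open set U ⊂ ℝ×ℝⁿ, with homogeneous decomposition f = f₂+f₁+f₀. Let ψ be real-analytic with Σ = {(t,x)∈U : t=ψ(x)} ⊂ U, and assume there is a nonzero constant a such that 0 ≠ 1 − |∇ψ(x)|² = a·f₂(ψ(x),x;−1,∇ψ(x)) for all x with (ψ(x),x) ∈ U. Then for any real-analytic function v₀ on Σ there exists a real-analytic function v(t,x) on an open neighborhood Ω of Σ such that u(t,x) = −a·log(t−ψ(x)) + v(t,x) solves u_tt − Δu = f(t,x;∂_t u, ∇u) on Ω ∩ {t > ψ(x)} and v restricted to Σ coincides with v₀; moreover such a v is unique in a neighborhood of Σ. -/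

import Mathlib

open Real Filter

/-- partial derivative in `t` of a function `u(t,x)` -/
noncomputable def ptd {n : ℕ} (u : ℝ → (Fin n → ℝ) → ℝ) (t : ℝ) (x : Fin n → ℝ) : ℝ :=
  deriv (fun s => u s x) t

/-- partial derivative in `x i` of a function `u(t,x)` -/
noncomputable def pxd {n : ℕ} (i : Fin n) (u : ℝ → (Fin n → ℝ) → ℝ) (t : ℝ)
    (x : Fin n → ℝ) : ℝ :=
  deriv (fun y => u t (Function.update x i y)) (x i)

/-- Laplacian in `x` of a function `u(t,x)` -/
noncomputable def lapx {n : ℕ} (u : ℝ → (Fin n → ℝ) → ℝ) (t : ℝ) (x : Fin n → ℝ) : ℝ :=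
  ∑ i, pxd i (pxd i u) t x

/-- gradient in `x` of a function `u(t,x)` -/
noncomputable def gradx {n : ℕ} (u : ℝ → (Fin n → ℝ) → ℝ) (t : ℝ) (x : Fin n → ℝ) :
    Fin n → ℝ :=
  fun i => pxd i u t x

/-- gradient of a function of `x` alone -/
noncomputable def gradp {n : ℕ} (ψ : (Fin n → ℝ) → ℝ) (x : Fin n → ℝ) : Fin n → ℝ :=
  fun i => deriv (fun y => ψ (Function.update x i y)) (x i)

/-- `g(t,x;τ,ξ)` is a polynomial homogeneous of degree `l` in `(τ,ξ) ∈ ℝ × ℝⁿ` whose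
coefficients are real-analytic functions of `(t,x)` on `U`. -/
def HomogPoly {n : ℕ} (l : ℕ) (U : Set (ℝ × (Fin n → ℝ)))
    (g : ℝ → (Fin n → ℝ) → ℝ → (Fin n → ℝ) → ℝ) : Prop :=
  ∃ c : (Fin l → Fin (n + 1)) → ℝ → (Fin n → ℝ) → ℝ,
    (∀ μ, AnalyticOnNhd ℝ (fun p : ℝ × (Fin n → ℝ) => c μ p.1 p.2) U) ∧
    ∀ t x τ ξ, g t x τ ξ = ∑ μ : Fin l → Fin (n + 1), c μ t x * ∏ k, (Fin.cons τ ξ : Fin (n + 1) → ℝ) (μ k)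

/-- `u` solves the nonlinear wave equation `u_tt - Δu = f₂ + f₁ + f₀ (t,x; ∂_t u, ∇u)`
at every point of `S`. -/
def SolvesWave {n : ℕ} (f₂ f₁ f₀ : ℝ → (Fin n → ℝ) → ℝ → (Fin n → ℝ) → ℝ)
    (u : ℝ → (Fin n → ℝ) → ℝ) (S : Set (ℝ × (Fin n → ℝ))) : Prop :=
  ∀ t x, (t, x) ∈ S →
    ptd (ptd u) t x - lapx u t x =
      f₂ t x (ptd u t x) (gradx u t x) + f₁ t x (ptd u t x) (gradx u t x)
        + f₀ t x (ptd u t x) (gradx u t x)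

open Real Filter

section FuchsianCK

abbrev PS (N : ℕ) := MvPowerSeries (Fin N) ℝ

/-- coefficient -/
noncomputable def cf {N : ℕ} (α : Fin N →₀ ℕ) (F : PS N) : ℝ := MvPowerSeries.coeff α F

/-- monomials -/
noncomputable def mon {N : ℕ} (x : Fin N → ℝ) (α : Fin N →₀ ℕ) : ℝ := ∏ i, x i ^ α i

lemma mon_add {N : ℕ} (x : Fin N → ℝ) (α β : Fin N →₀ ℕ) :
    mon x (α + β) = mon x α * mon x β := by
  simp [mon, pow_add, Finset.prod_mul_distrib]

lemma mon_abs_le {N : ℕ} (x : Fin N → ℝ) (α : Fin N →₀ ℕ) {r : ℝ} (hx : ‖x‖ ≤ r) :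
    |mon x α| ≤ r ^ α.degree := by
  rw [mon, Finset.abs_prod, Finsupp.degree_eq_sum, ← Finset.prod_pow_eq_pow_sum]
  refine Finset.prod_le_prod (fun i _ => abs_nonneg _) (fun i _ => ?_)
  rw [abs_pow]
  exact pow_le_pow_left₀ (abs_nonneg _) ((norm_le_pi_norm x i).trans hx) _

def SumAt {N : ℕ} (F : PS N) (r : ℝ) : Prop := Summable fun α => |cf α F| * r ^ α.degree

def HasS {N : ℕ} (F : PS N) (r : ℝ) (f : (Fin N → ℝ) → ℝ) : Prop :=
  SumAt F r ∧ ∀ x, ‖x‖ < r → HasSum (fun α => cf α F * mon x α) (f x)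

def SRep {N : ℕ} (F : PS N) (f : (Fin N → ℝ) → ℝ) : Prop := ∃ r > 0, HasS F r f

lemma SumAt.mono {N : ℕ} {F : PS N} {r r' : ℝ} (h : SumAt F r) (h0 : 0 ≤ r') (hr : r' ≤ r) :
    SumAt F r' := by
  refine Summable.of_nonneg_of_le (fun α => by positivity) (fun α => ?_) h
  gcongr

lemma SumAt.norm {N : ℕ} {F : PS N} {r : ℝ} (h : SumAt F r) {x : Fin N → ℝ} (hx : ‖x‖ ≤ r) :
    Summable fun α => ‖cf α F * mon x α‖ := by
  refine Summable.of_nonneg_of_le (fun α => by positivity) (fun α => ?_) h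
  rw [norm_mul]
  exact mul_le_mul_of_nonneg_left (mon_abs_le x α hx) (abs_nonneg _)

lemma HasS.mono {N : ℕ} {F : PS N} {r r' : ℝ} {f} (h : HasS F r f) (h0 : 0 ≤ r') (hr : r' ≤ r) :
    HasS F r' f := ⟨h.1.mono h0 hr, fun x hx => h.2 x (hx.trans_le hr)⟩

lemma SumAt.exists {N : ℕ} {F : PS N} {r : ℝ} (h : SumAt F r) : ∃ f, HasS F r f :=
  ⟨fun x => ∑' α, cf α F * mon x α, h, fun _ hx =>
    ((h.norm hx.le).of_norm).hasSum⟩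

lemma SRep.congr {N : ℕ} {F : PS N} {f g} (h : SRep F f) (hfg : f =ᶠ[nhds 0] g) : SRep F g := by
  obtain ⟨r, hr, h⟩ := h
  obtain ⟨e, he, h'⟩ := Metric.eventually_nhds_iff.1 hfg
  refine ⟨min r e, lt_min hr he, (h.mono (lt_min hr he).le (min_le_left _ _)).1, fun x hx => ?_⟩
  have := h' (y := x) (by simpa using hx.trans_le (min_le_right _ _))
  rw [← this]
  exact h.2 x (hx.trans_le (min_le_left _ _))

lemma SRep.eventuallyEq {N : ℕ} {F : PS N} {f g} (h : SRep F f) (h' : SRep F g) :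
    f =ᶠ[nhds 0] g := by
  obtain ⟨r, hr, h⟩ := h
  obtain ⟨e, he, h'⟩ := h'
  refine Metric.eventually_nhds_iff.2 ⟨min r e, lt_min hr he, fun x hx => ?_⟩
  have hx' : ‖x‖ < min r e := by simpa using hx
  exact (h.2 x (hx'.trans_le (min_le_left _ _))).unique (h'.2 x (hx'.trans_le (min_le_right _ _)))

lemma SRep.two {N : ℕ} {F G : PS N} {f g} (h : SRep F f) (h' : SRep G g) :
    ∃ r > 0, HasS F r f ∧ HasS G r g := by
  obtain ⟨r, hr, h⟩ := h
  obtain ⟨e, he, h'⟩ := h'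
  exact ⟨min r e, lt_min hr he, h.mono (lt_min hr he).le (min_le_left _ _),
    h'.mono (lt_min hr he).le (min_le_right _ _)⟩

lemma SRep.add {N : ℕ} {F G : PS N} {f g} (h : SRep F f) (h' : SRep G g) :
    SRep (F + G) (fun x => f x + g x) := by
  obtain ⟨r, hr, h, h'⟩ := h.two h'
  refine ⟨r, hr, ?_, fun x hx => ?_⟩
  · refine Summable.of_nonneg_of_le (fun α => by positivity) (fun α => ?_) (Summable.add h.1 h'.1)
    rw [← add_mul]
    refine mul_le_mul_of_nonneg_right ?_ (by positivity)
    simp only [cf, map_add]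
    exact abs_add_le _ _
  · convert (h.2 x hx).add (h'.2 x hx) using 2
    simp [cf, add_mul]

lemma cauchy_aux {N : ℕ} {f g : (Fin N →₀ ℕ) → ℝ} (hf : Summable fun α => ‖f α‖)
    (hg : Summable fun α => ‖g α‖) : HasSum
      (fun α => ∑ p ∈ Finset.HasAntidiagonal.antidiagonal α, f p.1 * g p.2) ((∑' α, f α) * (∑' α, g α)) := by
  have h3 := summable_mul_of_summable_norm hf hg
  rw [hf.of_norm.tsum_mul_tsum_eq_tsum_sum_antidiagonal hg.of_norm h3]
  exact (summable_sum_mul_antidiagonal_of_summable_mul h3).hasSum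

lemma SRep.mul {N : ℕ} {F G : PS N} {f g} (h : SRep F f) (h' : SRep G g) :
    SRep (F * G) (fun x => f x * g x) := by
  classical
  obtain ⟨r, hr, h, h'⟩ := h.two h'
  refine ⟨r, hr, ?_, fun x hx => ?_⟩
  · have a1 : Summable fun α => ‖|cf α F| * r ^ α.degree‖ := Summable.norm h.1
    have a2 : Summable fun α => ‖|cf α G| * r ^ α.degree‖ := Summable.norm h'.1
    have h1 := (cauchy_aux a1 a2).summable
    refine Summable.of_nonneg_of_le (fun α => by positivity) (fun α => ?_) h1
    simp only [cf, MvPowerSeries.coeff_mul]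
    calc _ ≤ (∑ p ∈ Finset.HasAntidiagonal.antidiagonal α,
          |MvPowerSeries.coeff p.1 F * MvPowerSeries.coeff p.2 G|) * r ^ α.degree :=
            mul_le_mul_of_nonneg_right (Finset.abs_sum_le_sum_abs _ _) (by positivity)
      _ = _ := by
          rw [Finset.sum_mul]
          refine Finset.sum_congr rfl ?_
          rintro ⟨p, q⟩ hpq
          rw [Finset.HasAntidiagonal.mem_antidiagonal] at hpq
          simp only at hpq
          rw [← hpq, map_add, pow_add, abs_mul]; ring
  · have h1 := (h.1.norm hx.le)
    have h2 := (h'.1.norm hx.le)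
    have h5 := cauchy_aux h1 h2
    rw [(h.2 x hx).tsum_eq, (h'.2 x hx).tsum_eq] at h5
    convert h5 using 2 with α
    simp only [cf, MvPowerSeries.coeff_mul]
    rw [Finset.sum_mul]
    refine Finset.sum_congr rfl ?_
    rintro ⟨p, q⟩ hpq
    rw [Finset.HasAntidiagonal.mem_antidiagonal] at hpq
    simp only at hpq
    rw [← hpq, mon_add]; ring

lemma SRep.C {N : ℕ} (c : ℝ) : SRep (MvPowerSeries.C c : PS N) (fun _ => c) := by
  classical
  have key : ∀ x : Fin N → ℝ, ∀ α, α ≠ 0 → cf α (MvPowerSeries.C c : PS N) = 0 := by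
    intro x α hα
    simp [cf, MvPowerSeries.coeff_C, hα]
  refine ⟨1, one_pos, ?_, fun x hx => ?_⟩
  · refine summable_of_ne_finset_zero (s := {0}) fun α hα => ?_
    rw [key 0 α (by simpa using hα)]; simp
  · convert hasSum_single (f := fun α => cf α (MvPowerSeries.C c : PS N) * mon x α) 0 ?_ using 1
    · simp [cf, mon]
    · intro α hα
      simp [key x α hα]

lemma SRep.X {N : ℕ} (j : Fin N) : SRep (MvPowerSeries.X j : PS N) (fun x => x j) := by
  classical
  have key : ∀ α, α ≠ Finsupp.single j 1 → cf α (MvPowerSeries.X j : PS N) = 0 := by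
    intro α hα
    simp [cf, MvPowerSeries.coeff_X, hα]
  refine ⟨1, one_pos, ?_, fun x hx => ?_⟩
  · refine summable_of_ne_finset_zero (s := {Finsupp.single j 1}) fun α hα => ?_
    rw [key α (by simpa using hα)]; simp
  · convert hasSum_single (f := fun α => cf α (MvPowerSeries.X j : PS N) * mon x α)
      (Finsupp.single j 1) ?_ using 1
    · simp [cf, mon, MvPowerSeries.coeff_X, Finsupp.single_apply, pow_ite]
    · intro α hα
      simp [key α hα]

lemma SRep.sum {N : ℕ} {ι : Type*} (s : Finset ι) {F : ι → PS N} {f : ι → (Fin N → ℝ) → ℝ}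
    (h : ∀ i, SRep (F i) (f i)) : SRep (∑ i ∈ s, F i) (fun x => ∑ i ∈ s, f i x) := by
  classical
  induction s using Finset.induction_on with
  | empty => simpa using SRep.C (N := N) 0
  | insert i s hi ih =>
    simp only [Finset.sum_insert hi]
    exact (h i).add ih

lemma SRep.neg {N : ℕ} {F : PS N} {f} (h : SRep F f) : SRep (-F) (fun x => - f x) := by
  simpa using (SRep.C (-1)).mul h

lemma SRep.sub {N : ℕ} {F G : PS N} {f g} (h : SRep F f) (h' : SRep G g) :
    SRep (F - G) (fun x => f x - g x) := by
  simpa [sub_eq_add_neg] using h.add h'.neg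

section
end

/-- partial derivative of a function on `ℝ^N` -/
noncomputable def pd {N : ℕ} (j : Fin N) (f : (Fin N → ℝ) → ℝ) (x : Fin N → ℝ) : ℝ :=
  deriv (fun y => f (Function.update x j y)) (x j)

noncomputable abbrev fd {N : ℕ} (j : Fin N) (F : PS N) : PS N := MvPowerSeries.pderiv ℝ j F

lemma cf_fd {N : ℕ} (j : Fin N) (F : PS N) (α) :
    cf α (fd j F) = cf (α + Finsupp.single j 1) F * (α j + 1) := by
  simp [cf, fd, MvPowerSeries.coeff_pderiv]

lemma mon_update {N : ℕ} (x : Fin N → ℝ) (j : Fin N) (y : ℝ) (α : Fin N →₀ ℕ) :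
    mon (Function.update x j y) α = y ^ α j * ∏ i ∈ Finset.univ.erase j, x i ^ α i := by
  rw [mon, ← Finset.mul_prod_erase _ _ (Finset.mem_univ j)]
  simp only [Function.update_self]
  congr 1
  refine Finset.prod_congr rfl fun i hi => ?_
  rw [Function.update_of_ne (Finset.ne_of_mem_erase hi)]

lemma bound_aux {r r' : ℝ} (h0 : 0 < r') (hr : r' < r) :
    ∃ C, ∀ d : ℕ, (d : ℝ) * r' ^ (d - 1) ≤ C * r ^ d := by
  have hq : r' / r < 1 := (div_lt_one (h0.trans hr)).2 hr
  have hq0 : 0 < r' / r := div_pos h0 (h0.trans hr)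
  have := tendsto_self_mul_const_pow_of_lt_one hq0.le hq
  obtain ⟨C, hC⟩ := this.bddAbove_range
  refine ⟨C / r', fun d => ?_⟩
  have h1 := hC ⟨d, rfl⟩
  simp only [div_pow] at h1
  have hrd : 0 < r ^ d := pow_pos (h0.trans hr) _
  rcases d with _ | d
  · simp at h1 ⊢; positivity
  · have : ((d + 1 : ℕ) : ℝ) * r' ^ (d + 1) ≤ C * r ^ (d + 1) := by
      rw [← mul_div_assoc, div_le_iff₀ hrd] at h1; exact h1
    rw [div_mul_eq_mul_div, le_div_iff₀ h0]
    simp only [Nat.add_sub_cancel]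
    rw [pow_succ r'] at this
    linarith

lemma HasS.fd {N : ℕ} {F : PS N} {r r' : ℝ} {f} (h : HasS F r f) (h0 : 0 < r') (hr : r' < r)
    (j : Fin N) : HasS (fd j F) r' (pd j f) ∧
      ∀ x, ‖x‖ < r' → HasDerivAt (fun y => f (Function.update x j y)) (pd j f x) (x j) := by
  have hinj : Function.Injective fun β : Fin N →₀ ℕ => β + Finsupp.single j 1 :=
    fun a b hab => by simpa using hab
  obtain ⟨C, hC⟩ := bound_aux h0 hr
  have hdeg : ∀ α : Fin N →₀ ℕ, (α j : ℝ) ≤ α.degree := fun α => by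
    exact_mod_cast Finsupp.le_degree j α
  have hS : Summable fun α => |cf α F| * ((α j : ℝ) * r' ^ (α.degree - 1)) := by
    refine Summable.of_nonneg_of_le (fun α => by positivity) (fun α => ?_) (Summable.mul_left C h.1)
    calc _ ≤ |cf α F| * (C * r ^ α.degree) := by
          refine mul_le_mul_of_nonneg_left ?_ (abs_nonneg _)
          refine le_trans ?_ (hC _)
          exact mul_le_mul_of_nonneg_right (hdeg α) (by positivity)
      _ = _ := by ring
  have hder : ∀ x : Fin N → ℝ, ‖x‖ < r' →
      HasDerivAt (fun y => f (Function.update x j y))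
        (∑' α, cf α F * ((α j * x j ^ (α j - 1)) * ∏ i ∈ Finset.univ.erase j, x i ^ α i)) (x j) ∧
      Summable (fun α => cf α F *
        ((α j * x j ^ (α j - 1)) * ∏ i ∈ Finset.univ.erase j, x i ^ α i)) := by
    intro x hx
    have hxi : ∀ i, |x i| < r' := fun i => (norm_le_pi_norm x i).trans_lt hx
    have hup : ∀ y ∈ Metric.ball (0 : ℝ) r', ‖Function.update x j y‖ < r' := by
      intro y hy
      refine (pi_norm_lt_iff h0).2 fun i => ?_
      by_cases hij : i = j
      · subst hij; simpa using hy
      · simpa [Function.update_of_ne hij] using hxi i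
    have hbd : ∀ (α : Fin N →₀ ℕ) (y : ℝ), y ∈ Metric.ball (0 : ℝ) r' →
        ‖cf α F * ((α j * y ^ (α j - 1)) * ∏ i ∈ Finset.univ.erase j, x i ^ α i)‖ ≤
        |cf α F| * ((α j : ℝ) * r' ^ (α.degree - 1)) := by
      intro α y hy
      rw [norm_mul, Real.norm_eq_abs (cf α F)]
      refine mul_le_mul_of_nonneg_left ?_ (abs_nonneg _)
      rcases Nat.eq_zero_or_pos (α j) with h0' | hpos
      · simp [h0']
      have hd : α.degree - 1 = (α j - 1) + ∑ i ∈ Finset.univ.erase j, α i := by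
        rw [Finsupp.degree_eq_sum, ← Finset.add_sum_erase _ _ (Finset.mem_univ j)]; omega
      rw [hd, pow_add, norm_mul, norm_mul, norm_pow, ← Finset.prod_pow_eq_pow_sum, ← mul_assoc]
      have hy' : ‖y‖ ≤ r' := by simpa using (Metric.mem_ball.1 hy).le
      refine mul_le_mul ?_ ?_ (norm_nonneg _) (by positivity)
      · simp only [Real.norm_natCast]
        gcongr
      · rw [norm_prod]
        refine Finset.prod_le_prod (fun i _ => norm_nonneg _) (fun i _ => ?_)
        rw [norm_pow]
        exact pow_le_pow_left₀ (norm_nonneg _) (hxi i).le _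
    have hxj : x j ∈ Metric.ball (0 : ℝ) r' := by simpa using hxi j
    have hsum : Summable fun α => cf α F * mon x α :=
      (h.1.norm (hx.le.trans hr.le)).of_norm
    have := hasDerivAt_tsum_of_isPreconnected (t := Metric.ball (0 : ℝ) r') (y₀ := x j) (y := x j)
      (g := fun α y => cf α F * (y ^ α j * ∏ i ∈ Finset.univ.erase j, x i ^ α i))
      (g' := fun α y => cf α F * ((α j * y ^ (α j - 1)) * ∏ i ∈ Finset.univ.erase j, x i ^ α i))
      hS Metric.isOpen_ball (convex_ball _ _).isPreconnected
      (fun α y hy => by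
        exact ((hasDerivAt_pow (α j) y).mul_const _).const_mul _) hbd hxj
      (by
        simp only [← mon_update]
        simpa using hsum) hxj
    refine ⟨this.congr_of_eventuallyEq ?_, ?_⟩
    · filter_upwards [Metric.isOpen_ball.mem_nhds hxj] with y hy
      simp only [← mon_update]
      exact (h.2 _ ((hup y hy).trans hr)).tsum_eq.symm
    · exact (Summable.of_nonneg_of_le (fun α => norm_nonneg _) (fun α => hbd α _ hxj) hS).of_norm
  have hpd : ∀ x : Fin N → ℝ, ‖x‖ < r' → pd j f x = 
     (∑' α, cf α F * ((α j * x j ^ (α j - 1)) * ∏ i ∈ Finset.univ.erase j, x i ^ α i)) :=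
    fun x hx => (hder x hx).1.deriv
  refine ⟨⟨?_, fun x hx => ?_⟩, fun x hx => by rw [hpd x hx]; exact (hder x hx).1⟩
  · have := hS.comp_injective hinj
    refine this.congr fun β => ?_
    simp only [Function.comp, cf_fd, abs_mul, map_add, Finsupp.degree_single, Finsupp.add_apply,
      Finsupp.single_eq_same, Nat.add_sub_cancel]
    rw [abs_of_nonneg (by positivity : (0 : ℝ) ≤ (β j : ℝ) + 1)]
    push_cast; ring
  · have h1 := (hder x hx).2.hasSum
    rw [← hpd x hx, ← hinj.hasSum_iff] at h1
    · convert h1 using 2 with β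
      simp only [Function.comp, cf_fd, Finsupp.add_apply,
        Finsupp.single_eq_same, Nat.add_sub_cancel]
      have : mon x β = mon (Function.update x j (x j)) β := by simp
      rw [this, mon_update]
      push_cast
      have h2 : ∏ i ∈ Finset.univ.erase j, x i ^ (β i + (Finsupp.single j 1) i) =
         ∏ i ∈ Finset.univ.erase j, x i ^ (β i) := by
        refine Finset.prod_congr rfl fun i hi => ?_
        rw [Finsupp.single_eq_of_ne (Finset.ne_of_mem_erase hi)]; simp
      rw [h2]; ring
    · intro α hα
      have : α j = 0 := by
        by_contra hne
        apply hα
        refine ⟨α - Finsupp.single j 1, ?_⟩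
        ext i
        by_cases hij : i = j
        · subst hij; simp; omega
        · simp [Finsupp.single_eq_of_ne hij]
      simp [this]

lemma SRep.fd {N : ℕ} {F : PS N} {f} (h : SRep F f) (j : Fin N) : SRep (fd j F) (pd j f) := by
  obtain ⟨r, hr, h⟩ := h
  exact ⟨r / 2, by positivity, (h.fd (by positivity) (by linarith) j).1⟩

lemma SRep.apply_zero {N : ℕ} {F : PS N} {f} (h : SRep F f) : f 0 = cf 0 F := by
  obtain ⟨r, hr, h⟩ := h
  have h1 := h.2 0 (by simpa using hr)
  have h2 := hasSum_single (f := fun α => cf α F * mon (0 : Fin N → ℝ) α) 0 (by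
    intro α hα
    obtain ⟨i, hi⟩ := Finsupp.ne_iff.1 hα
    have : mon (0 : Fin N → ℝ) α = 0 := by
      rw [mon]
      exact Finset.prod_eq_zero (Finset.mem_univ i) (by simpa using hi)
    simp [this])
  rw [h1.unique h2]
  simp [mon]

lemma SRep.pd_congr {N : ℕ} {f g : (Fin N → ℝ) → ℝ} (x : Fin N → ℝ) (h : f =ᶠ[nhds x] g)
    (j : Fin N) : pd j f x = pd j g x := by
  refine Filter.EventuallyEq.deriv_eq ?_
  have : Tendsto (fun y => Function.update x j y) (nhds (x j)) (nhds x) := by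
    have h := (continuous_const (y := x)).update j (continuous_id (X := ℝ)) |>.tendsto (x j)
    simpa using h
  exact this.eventually h

lemma SRep.eq_zero {N : ℕ} {F : PS N} {f} (h : SRep F f) (hf : f =ᶠ[nhds 0] fun _ => 0) : F = 0 := by
  have key : ∀ d : ℕ, ∀ α : Fin N →₀ ℕ, α.degree = d → ∀ (F : PS N) f, SRep F f →
      (f =ᶠ[nhds 0] fun _ => 0) → cf α F = 0 := by
    intro d
    induction d with
    | zero =>
      intro α hα F f h hf
      have : α = 0 := (Finsupp.degree_eq_zero_iff α).1 hα
      rw [this, ← h.apply_zero, hf.self_of_nhds]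
    | succ d ih =>
      intro α hα F f h hf
      obtain ⟨j, hj⟩ : ∃ j, α j ≠ 0 := by
        by_contra hcon
        push Not at hcon
        have : α = 0 := by ext i; simp [hcon]
        simp [this] at hα
      have hα' : α = (α - Finsupp.single j 1) + Finsupp.single j 1 := by
        ext i
        by_cases hij : i = j
        · subst hij; simp; omega
        · simp [Finsupp.single_eq_of_ne hij]
      set β := α - Finsupp.single j 1
      have h1 := ih β (by rw [hα'] at hα; simpa using hα) _ _ (h.fd j) (by
        filter_upwards [hf.eventuallyEq_nhds] with x hx
        rw [SRep.pd_congr x hx]; simp [pd])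
      rw [cf_fd] at h1
      rw [hα']
      exact (mul_eq_zero.1 h1).resolve_right (by positivity)
  ext α
  exact key _ α rfl F f h hf

lemma SRep.unique {N : ℕ} {F G : PS N} {f g} (h : SRep F f) (h' : SRep G g) (hfg : f =ᶠ[nhds 0] g) :
    F = G := by
  refine sub_eq_zero.1 ((h.sub h').eq_zero ?_)
  filter_upwards [hfg] with x hx
  simp [hx]

end FuchsianCK

open Real Filter

section FuchsianCK2

lemma word_exists {N : ℕ} (m : ℕ) : ∀ (α : Fin N →₀ ℕ), α.degree = m →
    ∃ e : Fin m → Fin N, ∀ x, ∏ k, x (e k) = mon x α := by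
  induction m with
  | zero =>
    intro α hα
    have : α = 0 := (Finsupp.degree_eq_zero_iff α).1 hα
    exact ⟨Fin.elim0, fun x => by simp [this, mon]⟩
  | succ d ih =>
    intro α hα
    obtain ⟨j, hj⟩ : ∃ j, α j ≠ 0 := by
      by_contra hcon
      push Not at hcon
      have : α = 0 := by ext i; simp [hcon]
      simp [this] at hα
    have hα' : α = (α - Finsupp.single j 1) + Finsupp.single j 1 := by
      ext i
      by_cases hij : i = j
      · subst hij; simp; omega
      · simp [Finsupp.single_eq_of_ne hij]
    set β := α - Finsupp.single j 1
    obtain ⟨e, he⟩ := ih β (by rw [hα'] at hα; simpa using hα)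
    refine ⟨Fin.cons j e, fun x => ?_⟩
    rw [Fin.prod_univ_succ, hα', mon_add, ← he x]
    simp [mon, Finsupp.single_apply, pow_ite, mul_comm]

lemma multilin_exists {N : ℕ} (m : ℕ) (α : Fin N →₀ ℕ) :
    ∃ M : ContinuousMultilinearMap ℝ (fun _ : Fin m => (Fin N → ℝ)) ℝ, ‖M‖ ≤ 1 ∧
      (α.degree = m → ∀ x, M (fun _ => x) = mon x α) := by
  by_cases h : α.degree = m
  · obtain ⟨e, he⟩ := word_exists m α h
    refine ⟨(ContinuousMultilinearMap.mkPiAlgebra ℝ (Fin m) ℝ).compContinuousLinearMap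
      (fun k => ContinuousLinearMap.proj (e k)), ?_, fun _ x => ?_⟩
    · refine ContinuousMultilinearMap.opNorm_le_bound zero_le_one fun x => ?_
      simp only [ContinuousMultilinearMap.compContinuousLinearMap_apply,
        ContinuousMultilinearMap.mkPiAlgebra_apply, ContinuousLinearMap.proj_apply, norm_prod,
        one_mul]
      exact Finset.prod_le_prod (fun i _ => norm_nonneg _) fun i _ => norm_le_pi_norm _ _
    · simpa using he x
  · exact ⟨0, by simp, fun h' => absurd h' h⟩

lemma HasS.analyticOnNhd {N : ℕ} {F : PS N} {r : ℝ} {f} (h : HasS F r f) (hr : 0 < r) :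
    AnalyticOnNhd ℝ f (Metric.ball 0 r) := by
  classical
  choose M hM hM' using (multilin_exists (N := N))
  let E := Equiv.sigmaFiberEquiv (fun α : Fin N →₀ ℕ => α.degree)
  have : ∀ m : ℕ, Finite {α : Fin N →₀ ℕ // α.degree = m} := fun m =>
    (Finsupp.finite_of_degree_eq m).to_subtype
  have : ∀ m : ℕ, Fintype {α : Fin N →₀ ℕ // α.degree = m} := fun m => Fintype.ofFinite _
  let p : FormalMultilinearSeries ℝ (Fin N → ℝ) ℝ := fun m =>
    ∑ α : {α : Fin N →₀ ℕ // α.degree = m}, cf α.1 F • M m α.1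
  have hp : HasFPowerSeriesOnBall f p 0 (ENNReal.ofReal r) := by
    refine ⟨?_, by simpa using hr, ?_⟩
    · refine p.le_radius_of_summable (r := r.toNNReal) ?_
      rw [Real.coe_toNNReal _ hr.le]
      have h1 := ((E.summable_iff).2 h.1).sigma
      refine Summable.of_nonneg_of_le (fun m => by positivity) (fun m => ?_) h1
      rw [tsum_fintype]
      have hE : ∀ α : {α : Fin N →₀ ℕ // α.degree = m},
          ((fun α => |cf α F| * r ^ α.degree) ∘ E) ⟨m, α⟩ = |cf α.1 F| * r ^ m := by
        intro α; simp [E, α.2]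
      simp only [hE]
      rw [← Finset.sum_mul]
      refine mul_le_mul_of_nonneg_right ?_ (by positivity)
      refine (norm_sum_le _ _).trans (Finset.sum_le_sum fun α _ => ?_)
      rw [norm_smul]
      exact mul_le_of_le_one_right (norm_nonneg _) (hM _ _)
    · intro y hy
      have hy' : ‖y‖ < r := by
        rw [Metric.eball_ofReal] at hy; simpa using hy
      rw [zero_add]
      have h1 := (E.hasSum_iff).2 (h.2 y hy')
      refine h1.sigma fun m => ?_
      convert hasSum_fintype _ using 1
      simp only [p, _root_.sum_apply, _root_.smul_apply]
      refine Finset.sum_congr rfl fun α _ => ?_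
      rw [hM' m α.1 α.2]; simp [E]
  rw [← Metric.eball_ofReal]
  exact hp.analyticOnNhd

lemma SRep.analyticAt {N : ℕ} {F : PS N} {f} (h : SRep F f) : AnalyticAt ℝ f 0 := by
  obtain ⟨r, hr, h⟩ := h
  exact h.analyticOnNhd hr 0 (by simpa using hr)

/-- multi-index of a word -/
noncomputable def cnt {N : ℕ} (w : Σ m, (Fin m → Fin N)) : Fin N →₀ ℕ :=
  ∑ k, Finsupp.single (w.2 k) 1

lemma mon_cnt {N : ℕ} (w : Σ m, (Fin m → Fin N)) (x : Fin N → ℝ) :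
    mon x (cnt w) = ∏ k, x (w.2 k) := by
  have h : ∀ s : Finset (Fin w.1), mon x (∑ k ∈ s, Finsupp.single (w.2 k) 1) =
      ∏ k ∈ s, x (w.2 k) := by
    intro s
    induction s using Finset.induction_on with
    | empty => simp [mon]
    | insert i s hi ih =>
      rw [Finset.sum_insert hi, Finset.prod_insert hi, mon_add, ih]
      simp [mon, Finsupp.single_apply, pow_ite]
  exact h _

lemma degree_cnt {N : ℕ} (w : Σ m, (Fin m → Fin N)) : (cnt w).degree = w.1 := by
  simp [cnt, map_sum]

lemma SRep.of_words {N : ℕ} {ω : Type*} {f : (Fin N → ℝ) → ℝ} (d : ω → (Fin N →₀ ℕ)) (a : ω → ℝ)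
    {t : ℝ} (ht0 : 0 < t) (hS : Summable fun w => |a w| * t ^ (d w).degree)
    (hSx : ∀ x : Fin N → ℝ, ‖x‖ < t → HasSum (fun w => a w * mon x (d w)) (f x)) :
    ∃ F, SRep F f := by
  let E := Equiv.sigmaFiberEquiv d
  let F : PS N := fun α => ∑' w : {w // d w = α}, a w.1
  have hcF : ∀ α, cf α F = ∑' w : {w // d w = α}, a w.1 := fun α => rfl
  have hS' : Summable ((fun w => |a w| * t ^ (d w).degree) ∘ E) := (E.summable_iff).2 hS
  refine ⟨F, t, ht0, ?_, fun x hx => ?_⟩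
  · refine Summable.of_nonneg_of_le (fun α => by positivity) (fun α => ?_) hS'.sigma
    rw [hcF]
    have h1 : ∀ w : {w // d w = α}, ((fun w => |a w| * t ^ (d w).degree) ∘ E) ⟨α, w⟩ =
        |a w.1| * t ^ α.degree := by
      rintro ⟨w, rfl⟩
      simp only [Function.comp, E, Equiv.sigmaFiberEquiv_apply]
    have h2 := hS'.sigma_factor α
    simp only [h1] at h2 ⊢
    rw [tsum_mul_right]
    refine mul_le_mul_of_nonneg_right ?_ (by positivity)
    have h4 : t ^ α.degree ≠ 0 := by positivity
    have h3 : Summable fun w : {w // d w = α} => ‖a w.1‖ := (summable_mul_right_iff h4).1 h2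
    exact norm_tsum_le_tsum_norm h3
  · have h1 := (E.hasSum_iff).2 (hSx x hx)
    refine h1.sigma fun α => ?_
    have h2 : ∀ w : {w // d w = α}, ((fun w => a w * mon x (d w)) ∘ E) ⟨α, w⟩ =
        a w.1 * mon x α := by
      rintro ⟨w, rfl⟩
      simp only [Function.comp, E, Equiv.sigmaFiberEquiv_apply]
    have h3 := h1.summable.sigma_factor α
    have h4 := h3.hasSum
    simp only [h2] at h4 ⊢
    rwa [tsum_mul_right] at h4

lemma SRep.of_analyticAt {N : ℕ} {f : (Fin N → ℝ) → ℝ} (h : AnalyticAt ℝ f 0) :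
    ∃ F, SRep F f := by
  classical
  obtain ⟨p, R, hp⟩ := h
  obtain ⟨r, hr0, hrR⟩ := ENNReal.lt_iff_exists_nnreal_btwn.1 hp.r_pos
  have hr0' : 0 < (r : ℝ) := by exact_mod_cast hr0
  obtain ⟨C, hC0, hC⟩ := p.norm_mul_pow_le_of_lt_radius (hrR.trans_le hp.r_le)
  set t : ℝ := r / (2 * (N + 1)) with ht
  have ht0 : 0 < t := by positivity
  have htr : t ≤ r := by
    rw [ht]; apply div_le_self hr0'.le; linarith [(Nat.cast_nonneg N : (0 : ℝ) ≤ N)]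
  let a : (Σ m, (Fin m → Fin N)) → ℝ := fun w => p w.1 (fun k => Pi.single (w.2 k) 1)
  have ha : ∀ w, |a w| ≤ ‖p w.1‖ := by
    intro w
    refine ((p w.1).le_opNorm _).trans ?_
    refine mul_le_of_le_one_right (norm_nonneg _) ?_
    exact Finset.prod_le_one (fun _ _ => norm_nonneg _) (fun k _ => by simp [Pi.norm_single])
  have hS : Summable fun w => |a w| * t ^ w.1 := by
    rw [summable_sigma_of_nonneg (fun w => by positivity)]
    refine ⟨fun m => Summable.of_finite, ?_⟩
    refine Summable.of_nonneg_of_le (fun m => tsum_nonneg fun e => by positivity) (fun m => ?_)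
      ((summable_geometric_two).mul_left C)
    rw [tsum_fintype]
    calc ∑ e : Fin m → Fin N, |a ⟨m, e⟩| * t ^ m ≤ ∑ e : Fin m → Fin N, ‖p m‖ * t ^ m :=
          Finset.sum_le_sum fun e _ => mul_le_mul_of_nonneg_right (ha ⟨m, e⟩) (by positivity)
      _ = (N : ℝ) ^ m * (‖p m‖ * t ^ m) := by simp
      _ ≤ ((N : ℝ) + 1) ^ m * (‖p m‖ * t ^ m) := by gcongr; linarith
      _ = (‖p m‖ * (r : ℝ) ^ m) * (1 / 2) ^ m := by
          have : t * (N + 1) = r * (1 / 2) := by rw [ht]; field_simp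
          calc _ = ‖p m‖ * (t * (N + 1)) ^ m := by rw [mul_pow]; ring
            _ = _ := by rw [this, mul_pow]; ring
      _ ≤ _ := mul_le_mul_of_nonneg_right (hC m) (by positivity)
  have hSx : ∀ x : Fin N → ℝ, ‖x‖ < t → HasSum (fun w => a w * mon x (cnt w)) (f x) := by
    intro x hx
    have h1 : Summable fun w => a w * mon x (cnt w) := by
      refine Summable.of_norm_bounded hS fun w => ?_
      rw [norm_mul]
      refine mul_le_mul_of_nonneg_left ?_ (norm_nonneg _)
      rw [← degree_cnt w]
      exact mon_abs_le _ _ hx.le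
    have h2 : HasSum (fun m => ∑ e : Fin m → Fin N, a ⟨m, e⟩ * mon x (cnt ⟨m, e⟩))
      (∑' w, a w * mon x (cnt w)) := h1.hasSum.sigma fun m => hasSum_fintype _
    have h3 := hp.hasSum (y := x) (by
      rw [mem_eball_zero_iff]
      refine lt_trans ?_ hrR
      rw [← ofReal_norm, ← ENNReal.ofReal_coe_nnreal]
      exact (ENNReal.ofReal_lt_ofReal_iff hr0').2 (hx.trans_le htr))
    rw [zero_add] at h3
    have h4 : (fun m => ∑ e : Fin m → Fin N, a ⟨m, e⟩ * mon x (cnt ⟨m, e⟩)) =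
        fun m => p m fun _ => x := by
      ext m
      have hx' : x = ∑ j, x j • (Pi.single j 1 : Fin N → ℝ) := by
        ext i; simp [Finset.sum_apply, Pi.single_apply]
      conv_rhs => rw [hx']
      rw [ContinuousMultilinearMap.map_sum]
      refine Finset.sum_congr rfl fun e _ => ?_
      rw [ContinuousMultilinearMap.map_smul_univ, mon_cnt, smul_eq_mul, mul_comm]
    rw [h4] at h2
    rw [← h2.unique h3]
    exact h1.hasSum
  exact SRep.of_words cnt a ht0 (by simpa only [degree_cnt] using hS) hSx

end FuchsianCK2

open Real Filter

section FuchsianCK3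
open scoped Nat NNReal ENNReal

lemma choose_fact' (i j : ℕ) : (i + j).choose i * i ! * j ! = (i + j)! := by
  rw [Nat.choose_symm_add]; exact Nat.add_choose_mul_factorial_mul_factorial i j

lemma choose_mul_choose_le (a b c d : ℕ) :
    (a + b).choose a * (c + d).choose c ≤ (a + c + (b + d)).choose (a + c) := by
  have : a + c + (b + d) = (a + b) + (c + d) := by ring
  rw [this, Nat.add_choose_eq (a + b) (c + d)]
  exact Finset.single_le_sum (f := fun ij : ℕ × ℕ => (a + b).choose ij.1 * (c + d).choose ij.2)
    (fun _ _ => Nat.zero_le _) (a := (a, c)) (Finset.HasAntidiagonal.mem_antidiagonal.2 rfl)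

lemma prod_choose_le {ι : Type*} (s : Finset ι) (f g : ι → ℕ) :
    ∏ i ∈ s, (f i + g i).choose (f i) ≤ (∑ i ∈ s, f i + ∑ i ∈ s, g i).choose (∑ i ∈ s, f i) := by
  classical
  induction s using Finset.induction_on with
  | empty => simp
  | insert i s hi ih =>
    rw [Finset.prod_insert hi, Finset.sum_insert hi, Finset.sum_insert hi]
    exact (Nat.mul_le_mul_left _ ih).trans (choose_mul_choose_le _ _ _ _)

lemma fact_aux1 {ι : Type*} (s : Finset ι) (f g : ι → ℕ) :
    (∏ i ∈ s, (f i + g i)!) * ((∑ i ∈ s, f i)! * (∑ i ∈ s, g i)!) ≤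
      (∑ i ∈ s, f i + ∑ i ∈ s, g i)! * ((∏ i ∈ s, (f i)!) * ∏ i ∈ s, (g i)!) := by
  have h1 : ∏ i ∈ s, (f i + g i)! =
      (∏ i ∈ s, (f i + g i).choose (f i)) * ((∏ i ∈ s, (f i)!) * ∏ i ∈ s, (g i)!) := by
    rw [← Finset.prod_mul_distrib, ← Finset.prod_mul_distrib]
    refine Finset.prod_congr rfl fun i _ => ?_
    rw [← choose_fact', mul_assoc]
  rw [h1, ← choose_fact' (∑ i ∈ s, f i)]
  calc _ = (∏ i ∈ s, (f i + g i).choose (f i)) * (((∏ i ∈ s, (f i)!) * ∏ i ∈ s, (g i)!) *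
      ((∑ i ∈ s, f i)! * (∑ i ∈ s, g i)!)) := by ring
    _ ≤ _ := Nat.mul_le_mul_right _ (prod_choose_le s f g)
    _ = _ := by ring

lemma fact_aux2 {ι : Type*} (s : Finset ι) (f : ι → ℕ) :
    (∑ i ∈ s, f i)! ≤ s.card ^ (∑ i ∈ s, f i) * ∏ i ∈ s, (f i)! := by
  classical
  induction s using Finset.induction_on with
  | empty => simp
  | insert i s hi ih =>
    rw [Finset.prod_insert hi, Finset.sum_insert hi, Finset.card_insert_of_notMem hi]
    set A := ∑ i ∈ s, f i
    have h1 : s.card ^ A * (f i + A).choose (f i) ≤ (s.card + 1) ^ (f i + A) := by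
      rw [add_pow]
      have := Finset.single_le_sum (f := fun k => s.card ^ k * 1 ^ (f i + A - k) *
        ((f i + A).choose k)) (s := Finset.range (f i + A + 1))
        (fun _ _ => Nat.zero_le _) (a := A) (by simp)
      simp only [one_pow, mul_one] at this
      rw [Nat.choose_symm_add]
      simpa using this
    rw [← choose_fact']
    calc _ ≤ (f i + A).choose (f i) * (f i)! * (s.card ^ A * ∏ i ∈ s, (f i)!) :=
          Nat.mul_le_mul_left _ ih
      _ = (s.card ^ A * (f i + A).choose (f i)) * ((f i)! * ∏ i ∈ s, (f i)!) := by ring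
      _ ≤ _ := Nat.mul_le_mul_right _ h1

variable {n : ℕ}

/-- weights -/
noncomputable def wt (ρ r : ℝ≥0) (α : Fin (n + 1) →₀ ℕ) : ℝ≥0 :=
  ρ ^ (α 0) * r ^ α.degree * ((∏ i, (α i)! : ℕ) : ℝ≥0) / ((α.degree)! : ℝ≥0)

lemma wt_add (ρ r : ℝ≥0) (α β : Fin (n + 1) →₀ ℕ) :
    wt ρ r (α + β) ≤ wt ρ r α * wt ρ r β := by
  have h := fact_aux1 Finset.univ (fun i => α i) (fun i => β i)
  rw [← Finsupp.degree_eq_sum, ← Finsupp.degree_eq_sum] at h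
  unfold wt
  rw [div_mul_div_comm, div_le_div_iff₀ (by positivity) (by positivity), map_add, pow_add,
    Finsupp.add_apply, pow_add]
  have h' : ((∏ i, ((α + β) i)! : ℕ) : ℝ≥0) * (((α.degree)! : ℝ≥0) * ((β.degree)! : ℝ≥0)) ≤
      ((α.degree + β.degree)! : ℝ≥0) * (((∏ i, (α i)! : ℕ) : ℝ≥0) * ((∏ i, (β i)! : ℕ) : ℝ≥0)) := by
    exact_mod_cast h
  calc _ = (ρ ^ α 0 * ρ ^ β 0 * (r ^ α.degree * r ^ β.degree)) *
      (((∏ i, ((α + β) i)! : ℕ) : ℝ≥0) * (((α.degree)! : ℝ≥0) * ((β.degree)! : ℝ≥0))) := by ring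
    _ ≤ _ := mul_le_mul_right h' _
    _ = _ := by ring

lemma prod_fact_single (β : Fin (n + 1) →₀ ℕ) (j : Fin (n + 1)) :
    ∏ i, ((β + Finsupp.single j 1 : Fin (n + 1) →₀ ℕ) i)! = (β j + 1) * ∏ i, (β i)! := by
  rw [← Finset.mul_prod_erase _ _ (Finset.mem_univ j),
    ← Finset.mul_prod_erase (Finset.univ) (fun i => (β i)!) (Finset.mem_univ j)]
  have : ∏ i ∈ Finset.univ.erase j, ((β + Finsupp.single j 1 : Fin (n + 1) →₀ ℕ) i)! =
      ∏ i ∈ Finset.univ.erase j, (β i)! := by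
    refine Finset.prod_congr rfl fun i hi => ?_
    simp [Finsupp.single_eq_of_ne (Finset.ne_of_mem_erase hi)]
  rw [this]
  simp [Nat.factorial_succ]; ring

lemma wt_shift (ρ r : ℝ≥0) (β : Fin (n + 1) →₀ ℕ) (j : Fin (n + 1)) (hj : j ≠ 0) :
    ((β j + 1 : ℕ) : ℝ≥0) * wt ρ r (β + Finsupp.single 0 1) =
      ρ * ((β 0 + 1 : ℕ) : ℝ≥0) * wt ρ r (β + Finsupp.single j 1) := by
  unfold wt
  rw [prod_fact_single, prod_fact_single]
  simp only [map_add, Finsupp.degree_single, Finsupp.add_apply, Finsupp.single_eq_same,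
    Finsupp.single_eq_of_ne hj.symm]
  push_cast
  rw [add_zero, pow_succ ρ]
  ring

lemma wt_single (ρ r : ℝ≥0) : wt ρ r (Finsupp.single (0 : Fin (n + 1)) 1) = ρ * r := by
  have := prod_fact_single (0 : Fin (n + 1) →₀ ℕ) 0
  rw [zero_add] at this
  unfold wt
  rw [this]
  simp

lemma wt_le_pow {ρ : ℝ≥0} (hρ : ρ ≤ 1) (r : ℝ≥0) (α : Fin (n + 1) →₀ ℕ) :
    wt ρ r α ≤ r ^ α.degree := by
  unfold wt
  rw [div_le_iff₀ (by positivity)]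
  have h : (∏ i, (α i)!) ≤ (α.degree)! := by
    rw [Finsupp.degree_eq_sum]
    exact Nat.le_of_dvd (Nat.factorial_pos _) (Nat.prod_factorial_dvd_factorial_sum _ _)
  have h' : ((∏ i, (α i)! : ℕ) : ℝ≥0) ≤ ((α.degree)! : ℝ≥0) := by exact_mod_cast h
  calc _ ≤ 1 * r ^ α.degree * ((α.degree)! : ℝ≥0) := by
        gcongr
        exact pow_le_one' hρ _
    _ = _ := by ring

lemma pow_le_wt {ρ : ℝ≥0} (hρ : ρ ≤ 1) (r : ℝ≥0) (α : Fin (n + 1) →₀ ℕ) :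
    (ρ * r / (n + 1)) ^ α.degree ≤ wt ρ r α := by
  unfold wt
  rw [le_div_iff₀ (by positivity)]
  have h := fact_aux2 Finset.univ (fun i => α i)
  rw [← Finsupp.degree_eq_sum, Finset.card_univ, Fintype.card_fin] at h
  have h' : ((α.degree)! : ℝ≥0) ≤ ((n : ℝ≥0) + 1) ^ α.degree * ((∏ i, (α i)! : ℕ) : ℝ≥0) := by
    exact_mod_cast h
  calc _ ≤ (ρ * r / (n + 1)) ^ α.degree *
        (((n : ℝ≥0) + 1) ^ α.degree * ((∏ i, (α i)! : ℕ) : ℝ≥0)) := by gcongr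
    _ = ρ ^ α.degree * r ^ α.degree * ((∏ i, (α i)! : ℕ) : ℝ≥0) := by
        rw [← mul_assoc, ← mul_pow, ← mul_pow, div_mul_cancel₀]; positivity
    _ ≤ _ := by
        gcongr ?_ * _ * _
        exact pow_le_pow_of_le_one zero_le hρ (Finsupp.le_degree 0 α)

lemma wt_mono {ρ : ℝ≥0} (hρ : ρ ≤ 1) (r : ℝ≥0) (α : Fin (n + 1) →₀ ℕ) :
    wt ρ r α ≤ wt 1 r α := by
  unfold wt
  gcongr

/-- weighted `ℓ¹` norm -/
noncomputable def nrm (ρ r : ℝ≥0) (F : PS (n + 1)) : ℝ≥0∞ :=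
  ∑' α, ((‖cf α F‖₊ * wt ρ r α : ℝ≥0) : ℝ≥0∞)

lemma nrm_add (ρ r : ℝ≥0) (F G : PS (n + 1)) : nrm ρ r (F + G) ≤ nrm ρ r F + nrm ρ r G := by
  unfold nrm
  rw [← ENNReal.tsum_add]
  refine ENNReal.tsum_le_tsum fun α => ?_
  rw [← ENNReal.coe_add, ENNReal.coe_le_coe, ← add_mul]
  gcongr
  simp only [cf, map_add]
  exact nnnorm_add_le _ _

lemma nrm_mul (ρ r : ℝ≥0) (F G : PS (n + 1)) : nrm ρ r (F * G) ≤ nrm ρ r F * nrm ρ r G := by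
  classical
  unfold nrm
  rw [← ENNReal.tsum_mul_right]
  simp_rw [← ENNReal.tsum_mul_left]
  rw [← ENNReal.tsum_prod (f := fun α β => ((‖cf α F‖₊ * wt ρ r α : ℝ≥0) : ℝ≥0∞) *
    ((‖cf β G‖₊ * wt ρ r β : ℝ≥0) : ℝ≥0∞)),
    ← Finset.HasAntidiagonal.sigmaAntidiagonalEquivProd.tsum_eq, ENNReal.tsum_sigma']
  refine ENNReal.tsum_le_tsum fun α => ?_
  rw [tsum_fintype]
  simp only [Finset.HasAntidiagonal.sigmaAntidiagonalEquivProd_apply]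
  rw [Finset.sum_coe_sort (Finset.HasAntidiagonal.antidiagonal α)
    (fun p => ((‖cf p.1 F‖₊ * wt ρ r p.1 : ℝ≥0) : ℝ≥0∞) *
    ((‖cf p.2 G‖₊ * wt ρ r p.2 : ℝ≥0) : ℝ≥0∞))]
  simp_rw [← ENNReal.coe_mul]
  rw [← ENNReal.ofNNReal_finsetSum, ENNReal.coe_le_coe]
  have h1 : ‖cf α (F * G)‖₊ ≤ ∑ p ∈ Finset.HasAntidiagonal.antidiagonal α,
      ‖cf p.1 F‖₊ * ‖cf p.2 G‖₊ := by
    simp only [cf, MvPowerSeries.coeff_mul]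
    refine (nnnorm_sum_le _ _).trans (Finset.sum_le_sum fun p _ => ?_)
    rw [nnnorm_mul]
  refine (mul_le_mul_left h1 _).trans ?_
  rw [Finset.sum_mul]
  refine Finset.sum_le_sum ?_
  rintro ⟨p, q⟩ hpq
  rw [Finset.HasAntidiagonal.mem_antidiagonal] at hpq
  simp only at hpq
  rw [← hpq]
  calc _ ≤ ‖cf p F‖₊ * ‖cf q G‖₊ * (wt ρ r p * wt ρ r q) := mul_le_mul_right (wt_add _ _ _ _) _
    _ = _ := by ring

lemma nrm_mono {ρ : ℝ≥0} (hρ : ρ ≤ 1) (r : ℝ≥0) (F : PS (n + 1)) : nrm ρ r F ≤ nrm 1 r F := by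
  refine ENNReal.tsum_le_tsum fun α => ?_
  rw [ENNReal.coe_le_coe]
  exact mul_le_mul_right (wt_mono hρ r α) _

lemma SumAt.nrm_lt {F : PS (n + 1)} {r : ℝ≥0} (h : SumAt F r) : nrm 1 r F < ⊤ := by
  have h1 : Summable fun α => ‖cf α F‖₊ * r ^ α.degree := by
    rw [← NNReal.summable_coe]
    exact h
  refine lt_of_le_of_lt ?_ (lt_top_iff_ne_top.2 (ENNReal.tsum_coe_ne_top_iff_summable.2 h1))
  refine ENNReal.tsum_le_tsum fun α => ?_
  rw [ENNReal.coe_le_coe]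
  exact mul_le_mul_right (wt_le_pow le_rfl r α) _

lemma sumAt_of_nrm_lt {F : PS (n + 1)} {ρ r : ℝ≥0} (hρ : ρ ≤ 1) (h : nrm ρ r F < ⊤) :
    SumAt F (ρ * r / (n + 1)) := by
  have h1 := ENNReal.tsum_coe_ne_top_iff_summable.1 h.ne
  have h2 : Summable fun α => ‖cf α F‖₊ * (ρ * r / (n + 1)) ^ α.degree :=
    NNReal.summable_of_le (fun α => mul_le_mul_right (pow_le_wt hρ r α) _) h1
  rw [← NNReal.summable_coe] at h2
  refine h2.congr fun α => ?_
  simp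

end FuchsianCK3

open Real Filter

section FuchsianCK4
open scoped Nat NNReal ENNReal

variable {n : ℕ}

lemma cf_add (α : Fin n →₀ ℕ) (F G : PS n) : cf α (F + G) = cf α F + cf α G := by
  simp [cf]

lemma cf_ext {F G : PS n} (h : ∀ α, cf α F = cf α G) : F = G := MvPowerSeries.ext h

/-- agreement up to order `k` in the variable `s` -/
def Agree (k : ℕ) (y y' : PS (n + 1)) : Prop := ∀ α : Fin (n + 1) →₀ ℕ, α 0 < k → cf α y = cf α y'

lemma Agree.mono {k l : ℕ} {y y' : PS (n + 1)} (h : Agree k y y') (hl : l ≤ k) : Agree l y y' :=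
  fun α hα => h α (hα.trans_le hl)

lemma Agree.refl (k : ℕ) (y : PS (n + 1)) : Agree k y y := fun _ _ => rfl

lemma Agree.symm {k : ℕ} {y y' : PS (n + 1)} (h : Agree k y y') : Agree k y' y :=
  fun α hα => (h α hα).symm

lemma Agree.trans {k : ℕ} {y y' y'' : PS (n + 1)} (h : Agree k y y') (h' : Agree k y' y'') :
    Agree k y y'' := fun α hα => (h α hα).trans (h' α hα)

lemma Agree.add {k : ℕ} {y y' z z' : PS (n + 1)} (h : Agree k y y') (h' : Agree k z z') :
    Agree k (y + z) (y' + z') := fun α hα => by rw [cf_add, cf_add, h α hα, h' α hα]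

lemma Agree.mul {k : ℕ} {y y' z z' : PS (n + 1)} (h : Agree k y y') (h' : Agree k z z') :
    Agree k (y * z) (y' * z') := fun α hα => by
  classical
  simp only [cf, MvPowerSeries.coeff_mul]
  refine Finset.sum_congr rfl ?_
  rintro ⟨p, q⟩ hpq
  rw [Finset.HasAntidiagonal.mem_antidiagonal] at hpq
  simp only at hpq
  have : p 0 + q 0 = α 0 := by rw [← hpq]; rfl
  have h1 := h p (by lia)
  have h2 := h' q (by lia)
  simp only [cf] at h1 h2
  simp only [h1, h2]

lemma Agree.X0mul {k : ℕ} {y y' : PS (n + 1)} (h : Agree k y y') :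
    Agree (k + 1) (MvPowerSeries.X 0 * y) (MvPowerSeries.X 0 * y') := fun α hα => by
  classical
  simp only [cf, MvPowerSeries.coeff_mul]
  refine Finset.sum_congr rfl ?_
  rintro ⟨p, q⟩ hpq
  rw [Finset.HasAntidiagonal.mem_antidiagonal] at hpq
  simp only at hpq
  have : p 0 + q 0 = α 0 := by rw [← hpq]; rfl
  simp only [MvPowerSeries.coeff_X]
  split_ifs with hp
  · have h0 : p 0 = 1 := by rw [hp]; simp
    have h2 := h q (by lia)
    simp only [cf] at h2
    rw [h2]
  · simp

variable {r : ℝ≥0}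

def Bd (r : ℝ≥0) (T : PS (n + 1) → PS (n + 1)) : Prop :=
  (∀ M : ℝ≥0, ∃ C : ℝ≥0, ∀ ρ : ℝ≥0, ρ ≤ 1 → ∀ y, nrm ρ r y ≤ M → nrm ρ r (T y) ≤ C) ∧
  ∀ k y y', Agree k y y' → Agree k (T y) (T y')

def Sm (r : ℝ≥0) (T : PS (n + 1) → PS (n + 1)) : Prop :=
  (∃ C₀ : ℝ≥0, ∀ M : ℝ≥0, ∃ C : ℝ≥0, ∀ ρ : ℝ≥0, ρ ≤ 1 → ∀ y, nrm ρ r y ≤ M →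
    nrm ρ r (T y) ≤ ((C₀ + ρ * C : ℝ≥0) : ℝ≥0∞)) ∧
  ∀ k y y', Agree k y y' → Agree (k + 1) (T y) (T y')

lemma Sm.bd {T : PS (n + 1) → PS (n + 1)} (h : Sm r T) : Bd r T := by
  obtain ⟨⟨C₀, h⟩, h'⟩ := h
  refine ⟨fun M => ?_, fun k y y' hy => (h' k y y' hy).mono (Nat.le_succ _)⟩
  obtain ⟨C, hC⟩ := h M
  refine ⟨C₀ + C, fun ρ hρ y hy => (hC ρ hρ y hy).trans ?_⟩
  rw [ENNReal.coe_le_coe]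
  gcongr
  exact mul_le_of_le_one_left zero_le hρ

lemma Bd.add {S T : PS (n + 1) → PS (n + 1)} (h : Bd r S) (h' : Bd r T) :
    Bd r (fun y => S y + T y) := by
  refine ⟨fun M => ?_, fun k y y' hy => (h.2 k y y' hy).add (h'.2 k y y' hy)⟩
  obtain ⟨C, hC⟩ := h.1 M
  obtain ⟨D, hD⟩ := h'.1 M
  refine ⟨C + D, fun ρ hρ y hy => (nrm_add _ _ _ _).trans ?_⟩
  rw [ENNReal.coe_add]
  exact add_le_add (hC ρ hρ y hy) (hD ρ hρ y hy)

lemma Bd.mul {S T : PS (n + 1) → PS (n + 1)} (h : Bd r S) (h' : Bd r T) :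
    Bd r (fun y => S y * T y) := by
  refine ⟨fun M => ?_, fun k y y' hy => (h.2 k y y' hy).mul (h'.2 k y y' hy)⟩
  obtain ⟨C, hC⟩ := h.1 M
  obtain ⟨D, hD⟩ := h'.1 M
  refine ⟨C * D, fun ρ hρ y hy => (nrm_mul _ _ _ _).trans ?_⟩
  rw [ENNReal.coe_mul]
  exact mul_le_mul' (hC ρ hρ y hy) (hD ρ hρ y hy)

lemma Sm.add {S T : PS (n + 1) → PS (n + 1)} (h : Sm r S) (h' : Sm r T) :
    Sm r (fun y => S y + T y) := by
  obtain ⟨⟨C₀, h⟩, hh⟩ := h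
  obtain ⟨⟨D₀, h'⟩, hh'⟩ := h'
  refine ⟨⟨C₀ + D₀, fun M => ?_⟩, fun k y y' hy => (hh k y y' hy).add (hh' k y y' hy)⟩
  obtain ⟨C, hC⟩ := h M
  obtain ⟨D, hD⟩ := h' M
  refine ⟨C + D, fun ρ hρ y hy => (nrm_add _ _ _ _).trans ?_⟩
  refine (add_le_add (hC ρ hρ y hy) (hD ρ hρ y hy)).trans ?_
  rw [← ENNReal.coe_add, ENNReal.coe_le_coe]
  apply le_of_eq; ring

lemma Sm.mul {S T : PS (n + 1) → PS (n + 1)} (h : Sm r S) (h' : Sm r T) :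
    Sm r (fun y => S y * T y) := by
  obtain ⟨⟨C₀, h⟩, hh⟩ := h
  obtain ⟨⟨D₀, h'⟩, hh'⟩ := h'
  refine ⟨⟨C₀ * D₀, fun M => ?_⟩, fun k y y' hy => (hh k y y' hy).mul (hh' k y y' hy)⟩
  obtain ⟨C, hC⟩ := h M
  obtain ⟨D, hD⟩ := h' M
  refine ⟨C₀ * D + C * D₀ + C * D, fun ρ hρ y hy => (nrm_mul _ _ _ _).trans ?_⟩
  refine (mul_le_mul' (hC ρ hρ y hy) (hD ρ hρ y hy)).trans ?_
  rw [← ENNReal.coe_mul, ENNReal.coe_le_coe]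
  calc (C₀ + ρ * C) * (D₀ + ρ * D) = C₀ * D₀ + ρ * (C₀ * D + C * D₀ + ρ * (C * D)) := by ring
    _ ≤ _ := by
      gcongr _ + _ * (_ + ?_)
      exact mul_le_of_le_one_left zero_le hρ

lemma Sm.const {c : PS (n + 1)} (hc : nrm 1 r c < ⊤) : Sm r (fun _ => c) := by
  refine ⟨⟨(nrm 1 r c).toNNReal, fun M => ⟨0, fun ρ hρ y hy => (nrm_mono hρ r c).trans ?_⟩⟩,
    fun k y y' _ => Agree.refl _ _⟩
  rw [mul_zero, add_zero, ENNReal.coe_toNNReal hc.ne]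

lemma cf_neg (α : Fin n →₀ ℕ) (F : PS n) : cf α (-F) = - cf α F := by
  simp [cf]

lemma cf_C_zero (c : ℝ) (α : Fin n →₀ ℕ) (hα : α ≠ 0) :
    cf α (MvPowerSeries.C c : PS n) = 0 := by
  classical
  simp [cf, MvPowerSeries.coeff_C, hα]

lemma nrm_C_lt (c : ℝ) : nrm 1 r (MvPowerSeries.C c : PS (n + 1)) < ⊤ := by
  unfold nrm
  rw [tsum_eq_single 0]
  · exact ENNReal.coe_lt_top
  · intro α hα
    rw [cf_C_zero c α hα]; simp

lemma Sm.C (c : ℝ) : Sm r (fun _ => (MvPowerSeries.C c : PS (n + 1))) := Sm.const (nrm_C_lt c)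

lemma nrm_neg (ρ r : ℝ≥0) (F : PS (n + 1)) : nrm ρ r (-F) = nrm ρ r F := by
  unfold nrm
  simp_rw [cf_neg, nnnorm_neg]

lemma Sm.neg {S : PS (n + 1) → PS (n + 1)} (h : Sm r S) : Sm r (fun y => - S y) := by
  obtain ⟨⟨C₀, h⟩, hh⟩ := h
  refine ⟨⟨C₀, fun M => ?_⟩, fun k y y' hy α hα => ?_⟩
  · obtain ⟨C, hC⟩ := h M
    exact ⟨C, fun ρ hρ y hy => by rw [nrm_neg]; exact hC ρ hρ y hy⟩
  · rw [cf_neg, cf_neg, hh k y y' hy α hα]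

lemma Sm.sub {S T : PS (n + 1) → PS (n + 1)} (h : Sm r S) (h' : Sm r T) :
    Sm r (fun y => S y - T y) := by
  simp only [sub_eq_add_neg]
  exact h.add h'.neg

lemma Sm.sum {ι : Type*} (s : Finset ι) {S : ι → PS (n + 1) → PS (n + 1)}
    (h : ∀ i ∈ s, Sm r (S i)) : Sm r (fun y => ∑ i ∈ s, S i y) := by
  classical
  induction s using Finset.induction_on with
  | empty => simpa using Sm.C (r := r) (n := n) 0
  | insert i s hi ih =>
    simp only [Finset.sum_insert hi]
    exact (h i (Finset.mem_insert_self _ _)).add (ih fun j hj => h j (Finset.mem_insert_of_mem hj))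

lemma nrm_X0 (ρ r : ℝ≥0) : nrm ρ r (MvPowerSeries.X 0 : PS (n + 1)) = ((ρ * r : ℝ≥0) : ℝ≥0∞) := by
  classical
  unfold nrm
  rw [tsum_eq_single (Finsupp.single 0 1)]
  · simp [cf, wt_single]
  · intro α hα
    simp [cf, MvPowerSeries.coeff_X, hα]

lemma Bd.X0 {S : PS (n + 1) → PS (n + 1)} (h : Bd r S) :
    Sm r (fun y => MvPowerSeries.X 0 * S y) := by
  refine ⟨⟨0, fun M => ?_⟩, fun k y y' hy => (h.2 k y y' hy).X0mul⟩
  obtain ⟨C, hC⟩ := h.1 M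
  refine ⟨r * C, fun ρ hρ y hy => (nrm_mul _ _ _ _).trans ?_⟩
  rw [nrm_X0, zero_add, ← mul_assoc, ENNReal.coe_mul (ρ * r)]
  exact mul_le_mul' le_rfl (hC ρ hρ y hy)

/-- diagonal operators -/
noncomputable def dg (d : ℕ → ℝ) (y : PS (n + 1)) : PS (n + 1) := fun α => d (α 0) * cf α y

lemma cf_dg (d : ℕ → ℝ) (y : PS (n + 1)) (α) : cf α (dg d y) = d (α 0) * cf α y := rfl

lemma nrm_dg {d : ℕ → ℝ} (hd : ∀ k, |d k| ≤ 1) (ρ r : ℝ≥0) (y : PS (n + 1)) :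
    nrm ρ r (dg d y) ≤ nrm ρ r y := by
  refine ENNReal.tsum_le_tsum fun α => ?_
  rw [ENNReal.coe_le_coe, cf_dg, nnnorm_mul]
  gcongr
  refine mul_le_of_le_one_left zero_le ?_
  exact hd _

lemma Bd.dg {d : ℕ → ℝ} (hd : ∀ k, |d k| ≤ 1) : Bd (n := n) r (dg d) := by
  refine ⟨fun M => ⟨M, fun ρ hρ y hy => (nrm_dg hd _ _ _).trans hy⟩, fun k y y' h α hα => ?_⟩
  rw [cf_dg, cf_dg, h α hα]

/-- integrate in `s`, differentiate in `x_j` -/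
noncomputable def Ij (j : Fin (n + 1)) (y : PS (n + 1)) : PS (n + 1) := fun α =>
  if α 0 = 0 then 0 else
    cf (α - Finsupp.single 0 1 + Finsupp.single j 1) y * ((α j : ℝ) + 1) / (α 0 : ℝ)

lemma cf_Ij_zero (j : Fin (n + 1)) (y : PS (n + 1)) (α : Fin (n + 1) →₀ ℕ) (h : α 0 = 0) :
    cf α (Ij j y) = 0 := by
  change (if α 0 = 0 then _ else _) = _
  rw [if_pos h]

lemma cf_Ij_succ {j : Fin (n + 1)} (hj : j ≠ 0) (y : PS (n + 1)) (β : Fin (n + 1) →₀ ℕ) :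
    cf (β + Finsupp.single 0 1) (Ij j y) =
      cf (β + Finsupp.single j 1) y * ((β j : ℝ) + 1) / ((β 0 : ℝ) + 1) := by
  change (if (β + Finsupp.single 0 1 : Fin (n + 1) →₀ ℕ) 0 = 0 then _ else _) = _
  rw [if_neg (by simp)]
  simp [Finsupp.single_eq_of_ne hj]

lemma exists_eq_add_single {j : Fin n} {α : Fin n →₀ ℕ} (h : α j ≠ 0) :
    ∃ β : Fin n →₀ ℕ, α = β + Finsupp.single j 1 :=
  ⟨α - Finsupp.single j 1, (tsub_add_cancel_of_le (by
    rw [Finsupp.single_le_iff]; lia)).symm⟩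

lemma nrm_Ij {j : Fin (n + 1)} (hj : j ≠ 0) (ρ r : ℝ≥0) (y : PS (n + 1)) :
    nrm ρ r (Ij j y) ≤ ρ * nrm ρ r y := by
  unfold nrm
  rw [← ENNReal.tsum_mul_left]
  have hinj : Function.Injective fun β : Fin (n + 1) →₀ ℕ => β + Finsupp.single 0 1 :=
    fun a b h => add_right_cancel h
  have hinj' : Function.Injective fun β : Fin (n + 1) →₀ ℕ => β + Finsupp.single j 1 :=
    fun a b h => add_right_cancel h
  rw [← hinj.tsum_eq]
  · refine le_trans ?_ (ENNReal.tsum_comp_le_tsum_of_injective hinj' _)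
    refine ENNReal.tsum_le_tsum fun β => ?_
    rw [← ENNReal.coe_mul, ENNReal.coe_le_coe, cf_Ij_succ hj]
    have h := wt_shift ρ r β j hj
    have e : ‖cf (β + Finsupp.single j 1) y * ((β j : ℝ) + 1) / ((β 0 : ℝ) + 1)‖₊ =
        ‖cf (β + Finsupp.single j 1) y‖₊ * ((β j + 1 : ℕ) : ℝ≥0) / ((β 0 + 1 : ℕ) : ℝ≥0) := by
      rw [nnnorm_div, nnnorm_mul]
      congr 2
      · rw [← Nat.cast_add_one, Real.nnnorm_natCast]
      · rw [← Nat.cast_add_one, Real.nnnorm_natCast]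
    rw [e, div_mul_eq_mul_div, mul_assoc, h, div_le_iff₀ (by positivity)]
    apply le_of_eq; ring
  · intro α hα
    by_cases h0 : α 0 = 0
    · exact absurd (by simp only [cf_Ij_zero j y α h0]; simp) hα
    · obtain ⟨β, rfl⟩ := exists_eq_add_single h0
      exact ⟨β, rfl⟩

lemma Bd.Ij {S : PS (n + 1) → PS (n + 1)} (h : Bd r S) {j : Fin (n + 1)} (hj : j ≠ 0) :
    Sm r (fun y => Ij j (S y)) := by
  refine ⟨⟨0, fun M => ?_⟩, fun k y y' hy α hα => ?_⟩
  · obtain ⟨C, hC⟩ := h.1 M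
    refine ⟨C, fun ρ hρ y hy => (nrm_Ij hj _ _ _).trans ?_⟩
    rw [zero_add, ENNReal.coe_mul]
    exact mul_le_mul' le_rfl (hC ρ hρ y hy)
  · by_cases h0 : α 0 = 0
    · rw [cf_Ij_zero _ _ _ h0, cf_Ij_zero _ _ _ h0]
    · obtain ⟨β, rfl⟩ := exists_eq_add_single h0
      rw [cf_Ij_succ hj, cf_Ij_succ hj, h.2 k y y' hy]
      simp [Finsupp.single_eq_of_ne hj.symm] at hα ⊢
      lia

theorem Sm.fixed {T : PS (n + 1) → PS (n + 1)} (h : Sm r T) :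
    ∃ y, T y = y ∧ ∃ ρ : ℝ≥0, 0 < ρ ∧ ρ ≤ 1 ∧ nrm ρ r y < ⊤ := by
  obtain ⟨⟨C₀, h⟩, hc⟩ := h
  set it : ℕ → PS (n + 1) := fun k => T^[k] 0 with hit
  have it_succ : ∀ k, it (k + 1) = T (it k) := fun k => Function.iterate_succ_apply' T k 0
  have a1 : ∀ k, Agree k (it k) (it (k + 1)) := by
    intro k
    induction k with
    | zero => exact fun α hα => absurd hα (Nat.not_lt_zero _)
    | succ k ih => rw [it_succ, it_succ (k + 1)]; exact hc _ _ _ ih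
  have a2 : ∀ k m, k ≤ m → Agree k (it k) (it m) := by
    intro k m hkm
    induction m, hkm using Nat.le_induction with
    | base => exact Agree.refl _ _
    | succ m hm ih => exact ih.trans ((a1 m).mono hm)
  let y : PS (n + 1) := fun α => cf α (it (α 0 + 1))
  have hy : ∀ α, cf α y = cf α (it (α 0 + 1)) := fun _ => rfl
  have a3 : ∀ k, Agree k y (it k) := fun k α hα => by
    rw [hy]; exact a2 (α 0 + 1) k hα α (Nat.lt_succ_self _)
  refine ⟨y, ?_, ?_⟩
  · refine cf_ext fun α => ?_
    have e1 := hc _ _ _ (a3 (α 0)) α (Nat.lt_succ_self _)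
    have e2 := a3 (α 0 + 1) α (Nat.lt_succ_self _)
    rw [e1, e2, it_succ]
  · obtain ⟨C, hC⟩ := h (C₀ + 1)
    refine ⟨min 1 (1 / (C + 1)), by positivity, min_le_left _ _, ?_⟩
    set ρ := min 1 (1 / (C + 1))
    have hρC : ρ * C ≤ 1 := by
      calc ρ * C ≤ 1 / (C + 1) * (C + 1) := by
            gcongr
            · exact min_le_right _ _
            · exact le_self_add
        _ = 1 := by field_simp
    have b1 : ∀ k, nrm ρ r (it k) ≤ ((C₀ + 1 : ℝ≥0) : ℝ≥0∞) := by
      intro k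
      induction k with
      | zero => simp [hit, nrm, cf]
      | succ k ih =>
        rw [it_succ]
        refine (hC ρ (min_le_left _ _) _ ih).trans ?_
        rw [ENNReal.coe_le_coe]
        gcongr
    refine lt_of_le_of_lt ?_ (ENNReal.coe_lt_top (r := C₀ + 1))
    unfold nrm
    rw [ENNReal.tsum_eq_iSup_sum]
    refine iSup_le fun s => ?_
    obtain ⟨k, hk⟩ : ∃ k, ∀ α ∈ s, α 0 < k :=
      ⟨s.sup (fun α => α 0) + 1, fun α hα =>
        Nat.lt_succ_of_le (Finset.le_sup (f := fun α : Fin (n + 1) →₀ ℕ => α 0) hα)⟩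
    calc _ = ∑ α ∈ s, ((‖cf α (it k)‖₊ * wt ρ r α : ℝ≥0) : ℝ≥0∞) :=
          Finset.sum_congr rfl fun α hα => by rw [a3 k α (hk α hα)]
      _ ≤ nrm ρ r (it k) := ENNReal.sum_le_tsum s
      _ ≤ _ := b1 k

theorem Sm.fixed_unique {T : PS (n + 1) → PS (n + 1)} (h : Sm r T) {y y'} (hy : T y = y)
    (hy' : T y' = y') : y = y' := by
  have : ∀ k, Agree k y y' := by
    intro k
    induction k with
    | zero => exact fun α hα => absurd hα (Nat.not_lt_zero _)
    | succ k ih => have := h.2 _ _ _ ih; rwa [hy, hy'] at this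
  exact cf_ext fun α => this (α 0 + 1) α (Nat.lt_succ_self _)

end FuchsianCK4

open Real Filter

section FuchsianCK5
open scoped Nat NNReal ENNReal

variable {n : ℕ}

lemma SRep.eventually_nrm {F : PS (n + 1)} {f} (h : SRep F f) :
    ∀ᶠ r : ℝ≥0 in nhdsWithin 0 (Set.Ioi 0), nrm 1 r F < ⊤ := by
  obtain ⟨r, hr, h⟩ := h
  have : Set.Iio r.toNNReal ∈ nhds (0 : ℝ≥0) := Iio_mem_nhds (by simpa using hr)
  filter_upwards [mem_nhdsWithin_of_mem_nhds this] with x hx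
  refine SumAt.nrm_lt (h.1.mono x.2 ?_)
  have h2 : x < r.toNNReal := hx
  exact (Real.lt_toNNReal_iff_coe_lt.1 h2).le

lemma cf_X0_zero (F : PS (n + 1)) (α : Fin (n + 1) →₀ ℕ) (h : α 0 = 0) :
    cf α (MvPowerSeries.X 0 * F) = 0 := by
  have := (Agree.X0mul (k := 0) (y := F) (y' := 0) (fun α hα => absurd hα (Nat.not_lt_zero _)))
    α (by lia)
  rw [this]; simp [cf]

lemma cf_X0_succ (F : PS (n + 1)) (β : Fin (n + 1) →₀ ℕ) :
    cf (β + Finsupp.single 0 1) (MvPowerSeries.X 0 * F) = cf β F := by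
  rw [add_comm β]
  simp only [cf, MvPowerSeries.X]
  rw [MvPowerSeries.coeff_add_monomial_mul, one_mul]

lemma cf_sub (α : Fin n →₀ ℕ) (F G : PS n) : cf α (F - G) = cf α F - cf α G := by
  simp [cf]

noncomputable def dK : ℕ → ℝ := fun k => 1 / (((k : ℝ) + 1) * (k + 2))
noncomputable def d2 : ℕ → ℝ := fun k => 1 / ((k : ℝ) + 2)
noncomputable def d3 : ℕ → ℝ := fun k => ((k : ℝ) + 1) / ((k : ℝ) + 2)

lemma d2_le (k : ℕ) : |d2 k| ≤ 1 := by
  unfold d2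
  rw [abs_of_nonneg (by positivity), div_le_one (by positivity)]
  linarith [(k.cast_nonneg : (0 : ℝ) ≤ k)]

lemma d3_le (k : ℕ) : |d3 k| ≤ 1 := by
  unfold d3
  rw [abs_of_nonneg (by positivity), div_le_one (by positivity)]
  linarith

/-- the reconstruction operator -/
noncomputable def RW (y : PS (n + 1)) : PS (n + 1) := MvPowerSeries.X 0 * dg dK y

lemma fd0_RW (y : PS (n + 1)) : fd 0 (RW y) = dg d2 y := by
  refine cf_ext fun α => ?_
  rw [cf_fd, RW, cf_X0_succ, cf_dg, cf_dg, dK, d2]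
  field_simp

lemma fdj_RW {j : Fin (n + 1)} (hj : j ≠ 0) (y : PS (n + 1)) :
    fd j (RW y) = Ij j (dg d2 y) := by
  refine cf_ext fun α => ?_
  rw [cf_fd, RW]
  by_cases h0 : α 0 = 0
  · rw [cf_Ij_zero _ _ _ h0, cf_X0_zero, zero_mul]
    simp [h0, Finsupp.single_eq_of_ne hj.symm]
  · obtain ⟨β, rfl⟩ := exists_eq_add_single h0
    rw [cf_Ij_succ hj, add_right_comm, cf_X0_succ, cf_dg, cf_dg, dK, d2]
    simp only [Finsupp.add_apply, Finsupp.single_eq_of_ne hj.symm, Finsupp.single_eq_of_ne hj,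
      add_zero]
    field_simp

lemma X0_fdj_dg {j : Fin (n + 1)} (hj : j ≠ 0) (y : PS (n + 1)) :
    MvPowerSeries.X 0 * fd j (dg d2 y) = Ij j (dg d3 y) := by
  refine cf_ext fun α => ?_
  by_cases h0 : α 0 = 0
  · rw [cf_Ij_zero _ _ _ h0, cf_X0_zero _ _ h0]
  · obtain ⟨β, rfl⟩ := exists_eq_add_single h0
    rw [cf_Ij_succ hj, cf_X0_succ, cf_fd, cf_dg, cf_dg, d2, d3]
    simp only [Finsupp.add_apply, Finsupp.single_eq_of_ne hj.symm, add_zero]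
    field_simp

lemma X0_fdj_Ij {j : Fin (n + 1)} (hj : j ≠ 0) (y : PS (n + 1)) :
    MvPowerSeries.X 0 * fd j (Ij j (dg d2 y)) = Ij j (Ij j y) := by
  refine cf_ext fun α => ?_
  by_cases h0 : α 0 = 0
  · rw [cf_Ij_zero _ _ _ h0, cf_X0_zero _ _ h0]
  · obtain ⟨β, rfl⟩ := exists_eq_add_single h0
    rw [cf_Ij_succ hj, cf_X0_succ, cf_fd]
    by_cases h1 : β 0 = 0
    · rw [cf_Ij_zero, cf_Ij_zero]
      · simp
      · simp [h1, Finsupp.single_eq_of_ne hj.symm]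
      · simp [h1, Finsupp.single_eq_of_ne hj.symm]
    · obtain ⟨γ, rfl⟩ := exists_eq_add_single h1
      rw [add_right_comm, cf_Ij_succ hj, cf_Ij_succ hj, cf_dg, d2]
      simp only [Finsupp.add_apply, Finsupp.single_eq_of_ne hj.symm, Finsupp.single_eq_of_ne hj,
        add_zero, Finsupp.single_eq_same]
      push_cast
      field_simp
      ring

lemma fd_add (j : Fin n) (F G : PS n) : fd j (F + G) = fd j F + fd j G := by
  simp

/-- main operator -/
noncomputable def MO (W : PS (n + 1)) : PS (n + 1) :=
  MvPowerSeries.X 0 * fd 0 (fd 0 W) + 2 * fd 0 W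

lemma cf_two_mul (α : Fin n →₀ ℕ) (F : PS n) : cf α (2 * F) = 2 * cf α F := by
  rw [two_mul, two_mul, cf_add]

lemma cf_MO (W : PS (n + 1)) (α : Fin (n + 1) →₀ ℕ) :
    cf α (MO W) = (α 0 + 1) * (α 0 + 2) * cf (α + Finsupp.single 0 1) W := by
  rw [MO, cf_add, cf_two_mul]
  by_cases h0 : α 0 = 0
  · rw [cf_X0_zero _ _ h0, cf_fd, h0]; push_cast; ring
  · obtain ⟨β, rfl⟩ := exists_eq_add_single h0
    rw [cf_X0_succ, cf_fd, cf_fd]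
    simp only [Finsupp.add_apply, Finsupp.single_eq_same]
    push_cast; ring

def NoS (W0 : PS (n + 1)) : Prop := ∀ α : Fin (n + 1) →₀ ℕ, α 0 ≠ 0 → cf α W0 = 0

def SliceEq (W W0 : PS (n + 1)) : Prop := ∀ α : Fin (n + 1) →₀ ℕ, α 0 = 0 → cf α W = cf α W0

lemma MO_RW {W0 : PS (n + 1)} (h : NoS W0) (y : PS (n + 1)) : MO (W0 + RW y) = y := by
  refine cf_ext fun α => ?_
  rw [cf_MO, cf_add, h _ (by simp), RW, cf_X0_succ, cf_dg, dK]
  field_simp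
  ring

lemma eq_RW {W W0 : PS (n + 1)} (h : NoS W0) (h' : SliceEq W W0) : W = W0 + RW (MO W) := by
  refine cf_ext fun α => ?_
  rw [cf_add, RW]
  by_cases h0 : α 0 = 0
  · rw [cf_X0_zero _ _ h0, h' α h0, add_zero]
  · rw [h α h0]
    obtain ⟨β, rfl⟩ := exists_eq_add_single h0
    rw [cf_X0_succ, cf_dg, cf_MO, dK]
    field_simp
    ring

lemma fd0_NoS {W0 : PS (n + 1)} (h : NoS W0) : fd 0 W0 = 0 := by
  refine cf_ext fun α => ?_
  rw [cf_fd, h _ (by simp)]; simp [cf]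

/-- coefficients of the reduced equation -/
structure Co (R : Type) (n : ℕ) where
  B : R
  al : R
  L : R
  A' : R
  g : R
  d : R
  c0 : R
  P : Fin n → R
  h : Fin n → R
  l : Fin n → R
  e : Fin n → Fin n → R

/-- right-hand side of the reduced equation -/
def EE {R : Type} [CommRing R] {n : ℕ} (c : Co R n) (s ws : R) (w ssj sjj : Fin n → R) : R :=
  c.B * (c.al * c.L + (∑ j, sjj j) - s * (c.L * ws) - (∑ j, (c.P j * ssj j + c.P j * ssj j))
    + c.A' * (s * (ws * ws))
    + (c.al - s * ws) * (c.al - s * ws) * c.g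
    + (c.al - s * ws) * (∑ j, c.h j * w j)
    + (∑ j, ∑ k, c.e j k * (s * (w j * w k)))
    + (c.al - s * ws) * c.d + s * (∑ j, c.l j * w j) + s * c.c0)

structure CoRep (C : Co (PS (n + 1)) n) (c : (Fin (n + 1) → ℝ) → Co ℝ n) : Prop where
  B : SRep C.B fun p => (c p).B
  al : SRep C.al fun p => (c p).al
  L : SRep C.L fun p => (c p).L
  A' : SRep C.A' fun p => (c p).A'
  g : SRep C.g fun p => (c p).g
  d : SRep C.d fun p => (c p).d
  c0 : SRep C.c0 fun p => (c p).c0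
  P : ∀ j, SRep (C.P j) fun p => (c p).P j
  h : ∀ j, SRep (C.h j) fun p => (c p).h j
  l : ∀ j, SRep (C.l j) fun p => (c p).l j
  e : ∀ j k, SRep (C.e j k) fun p => (c p).e j k

lemma CoRep.EE {C : Co (PS (n + 1)) n} {c} (h : CoRep C c) {S WS : PS (n + 1)}
    {W SSJ SJJ : Fin n → PS (n + 1)} {s ws : (Fin (n + 1) → ℝ) → ℝ}
    {w ssj sjj : Fin n → (Fin (n + 1) → ℝ) → ℝ} (hs : SRep S s) (hws : SRep WS ws)
    (hw : ∀ j, SRep (W j) (w j)) (hssj : ∀ j, SRep (SSJ j) (ssj j))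
    (hsjj : ∀ j, SRep (SJJ j) (sjj j)) :
    SRep (EE C S WS W SSJ SJJ)
      (fun p => EE (c p) (s p) (ws p) (fun j => w j p) (fun j => ssj j p) (fun j => sjj j p)) := by
  unfold _root_.EE
  have q := h.al.sub (hs.mul hws)
  exact h.B.mul (((((((((((h.al.mul h.L).add (SRep.sum Finset.univ fun j => hsjj j)).sub
    (hs.mul (h.L.mul hws))).sub (SRep.sum Finset.univ fun j =>
      ((h.P j).mul (hssj j)).add ((h.P j).mul (hssj j)))).add
    (h.A'.mul (hs.mul (hws.mul hws)))).add ((q.mul q).mul h.g)).add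
    (q.mul (SRep.sum Finset.univ fun j => (h.h j).mul (hw j)))).add
    (SRep.sum Finset.univ fun j => SRep.sum Finset.univ fun k =>
      (h.e j k).mul (hs.mul ((hw j).mul (hw k))))).add
    (q.mul h.d)).add (hs.mul (SRep.sum Finset.univ fun j => (h.l j).mul (hw j)))).add
    (hs.mul h.c0))

structure CoFin (r : ℝ≥0) (C : Co (PS (n + 1)) n) : Prop where
  B : nrm 1 r C.B < ⊤
  al : nrm 1 r C.al < ⊤
  L : nrm 1 r C.L < ⊤
  A' : nrm 1 r C.A' < ⊤
  g : nrm 1 r C.g < ⊤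
  d : nrm 1 r C.d < ⊤
  c0 : nrm 1 r C.c0 < ⊤
  P : ∀ j, nrm 1 r (C.P j) < ⊤
  h : ∀ j, nrm 1 r (C.h j) < ⊤
  l : ∀ j, nrm 1 r (C.l j) < ⊤
  e : ∀ j k, nrm 1 r (C.e j k) < ⊤

lemma CoRep.fin {C : Co (PS (n + 1)) n} {c} (h : CoRep C c) :
    ∀ᶠ r : ℝ≥0 in nhdsWithin 0 (Set.Ioi 0), CoFin r C := by
  filter_upwards [h.B.eventually_nrm, h.al.eventually_nrm, h.L.eventually_nrm,
    h.A'.eventually_nrm, h.g.eventually_nrm, h.d.eventually_nrm, h.c0.eventually_nrm,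
    eventually_all.2 fun j => (h.P j).eventually_nrm,
    eventually_all.2 fun j => (h.h j).eventually_nrm,
    eventually_all.2 fun j => (h.l j).eventually_nrm,
    eventually_all.2 fun j => eventually_all.2 fun k => (h.e j k).eventually_nrm]
    with r h1 h2 h3 h4 h5 h6 h7 h8 h9 h10 h11
  exact ⟨h1, h2, h3, h4, h5, h6, h7, h8, h9, h10, h11⟩

lemma Bd.id {r : ℝ≥0} : Bd (n := n) r (fun y => y) :=
  ⟨fun M => ⟨M, fun _ _ _ h => h⟩, fun _ _ _ h => h⟩

lemma CoFin.sm {r : ℝ≥0} {C : Co (PS (n + 1)) n} (h : CoFin r C)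
    {WS : PS (n + 1) → PS (n + 1)} {W SSJ SJJ : Fin n → PS (n + 1) → PS (n + 1)}
    (hws : Bd r WS) (hw : ∀ j, Sm r (W j)) (hssj : ∀ j, Sm r (SSJ j)) (hsjj : ∀ j, Sm r (SJJ j)) :
    Sm r (fun y => EE C (MvPowerSeries.X 0) (WS y) (fun j => W j y) (fun j => SSJ j y)
      (fun j => SJJ j y)) := by
  unfold _root_.EE
  have q := (Sm.const h.al).sub hws.X0
  have s1 : ∀ {T : PS (n + 1) → PS (n + 1)}, Sm r T → Sm r fun y => MvPowerSeries.X 0 * T y :=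
    fun hT => hT.bd.X0
  exact (Sm.const h.B).mul ((((((((((((Sm.const h.al).mul (Sm.const h.L)).add
    (Sm.sum Finset.univ fun j _ => hsjj j)).sub
    (((Sm.const h.L).bd.mul hws).X0)).sub (Sm.sum Finset.univ fun j _ =>
      ((Sm.const (h.P j)).mul (hssj j)).add ((Sm.const (h.P j)).mul (hssj j)))).add
    ((Sm.const h.A').mul (hws.mul hws).X0)).add ((q.mul q).mul (Sm.const h.g))).add
    (q.mul (Sm.sum Finset.univ fun j _ => (Sm.const (h.h j)).mul (hw j)))).add
    (Sm.sum Finset.univ fun j _ => Sm.sum Finset.univ fun k _ =>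
      (Sm.const (h.e j k)).mul (s1 ((hw j).mul (hw k))))).add
    (q.mul (Sm.const h.d))).add (s1 (Sm.sum Finset.univ fun j _ =>
      (Sm.const (h.l j)).mul (hw j)))).add (s1 (Sm.const h.c0)))

/-- the formal equation -/
def FEq (C : Co (PS (n + 1)) n) (W : PS (n + 1)) : Prop :=
  MO W = EE C (MvPowerSeries.X 0) (fd 0 W) (fun j => fd j.succ W)
    (fun j => MvPowerSeries.X 0 * fd j.succ (fd 0 W))
    (fun j => MvPowerSeries.X 0 * fd j.succ (fd j.succ W))

/-- the fixed point operator -/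
noncomputable def TT (C : Co (PS (n + 1)) n) (W0 y : PS (n + 1)) : PS (n + 1) :=
  EE C (MvPowerSeries.X 0) (dg d2 y) (fun j => fd j.succ W0 + Ij j.succ (dg d2 y))
    (fun j => Ij j.succ (dg d3 y))
    (fun j => MvPowerSeries.X 0 * fd j.succ (fd j.succ W0) + Ij j.succ (Ij j.succ y))

lemma FEq_iff (C : Co (PS (n + 1)) n) {W0 : PS (n + 1)} (h0 : NoS W0) (y : PS (n + 1)) :
    FEq C (W0 + RW y) ↔ TT C W0 y = y := by
  unfold FEq TT
  rw [MO_RW h0, fd_add, fd0_NoS h0, zero_add, fd0_RW]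
  simp_rw [fd_add, fdj_RW (Fin.succ_ne_zero _), X0_fdj_dg (Fin.succ_ne_zero _), mul_add,
    X0_fdj_Ij (Fin.succ_ne_zero _)]
  exact eq_comm

lemma TT_sm {C : Co (PS (n + 1)) n} {W0 : PS (n + 1)} {r : ℝ≥0} (h : CoFin r C)
    (h1 : ∀ j : Fin n, nrm 1 r (fd j.succ W0) < ⊤)
    (h2 : ∀ j : Fin n, nrm 1 r (fd j.succ (fd j.succ W0)) < ⊤) : Sm r (TT C W0) := by
  refine h.sm (Bd.dg d2_le) (fun j => (Sm.const (h1 j)).add ((Bd.dg d2_le).Ij (Fin.succ_ne_zero _)))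
    (fun j => ((Bd.dg d3_le).Ij (Fin.succ_ne_zero _)))
    (fun j => (Sm.const (h2 j)).bd.X0.add ?_)
  exact (Bd.id.Ij (Fin.succ_ne_zero j)).bd.Ij (Fin.succ_ne_zero j)

lemma exists_r {C : Co (PS (n + 1)) n} {c} (h : CoRep C c) {W0 : PS (n + 1)} {w0}
    (hw0 : SRep W0 w0) : ∃ r : ℝ≥0, 0 < r ∧ nrm 1 r W0 < ⊤ ∧ Sm r (TT C W0) := by
  have := (((h.fin.and hw0.eventually_nrm).and
    (eventually_all.2 fun j : Fin n => (hw0.fd j.succ).eventually_nrm)).and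
    (eventually_all.2 fun j : Fin n => ((hw0.fd j.succ).fd j.succ).eventually_nrm)).and
    self_mem_nhdsWithin
  obtain ⟨r, ⟨⟨⟨h1, h2⟩, h3⟩, h4⟩, h5⟩ := this.exists
  exact ⟨r, h5, h2, TT_sm h1 h3 h4⟩

theorem formal_exists {C : Co (PS (n + 1)) n} {c} (h : CoRep C c) {W0 : PS (n + 1)} {w0}
    (hw0 : SRep W0 w0) (hs : NoS W0) : ∃ W f, SRep W f ∧ SliceEq W W0 ∧ FEq C W := by
  obtain ⟨r, hr, hn, hT⟩ := exists_r h hw0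
  obtain ⟨y, hy, ρ, hρ, hρ1, hyn⟩ := hT.fixed
  have hW : nrm ρ r (W0 + RW y) < ⊤ := by
    refine (nrm_add _ _ _ _).trans_lt (ENNReal.add_lt_top.2 ⟨(nrm_mono hρ1 r _).trans_lt hn, ?_⟩)
    refine (nrm_mul _ _ _ _).trans_lt (ENNReal.mul_lt_top (by rw [nrm_X0]; exact ENNReal.coe_lt_top)
      ((nrm_dg ?_ _ _ _).trans_lt hyn))
    intro k
    unfold dK
    rw [abs_of_nonneg (by positivity), div_le_one (by positivity)]
    nlinarith [(k.cast_nonneg : (0 : ℝ) ≤ k)]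
  have hS := sumAt_of_nrm_lt hρ1 hW
  obtain ⟨f, hf⟩ := hS.exists
  refine ⟨W0 + RW y, f, ⟨_, by positivity, hf⟩, fun α hα => ?_, (FEq_iff C hs y).2 hy⟩
  rw [cf_add, RW, cf_X0_zero _ _ hα, add_zero]

theorem formal_unique {C : Co (PS (n + 1)) n} {c} (h : CoRep C c) {W0 : PS (n + 1)} {w0}
    (hw0 : SRep W0 w0) (hs : NoS W0) {W W' : PS (n + 1)} (h1 : SliceEq W W0) (h2 : FEq C W)
    (h1' : SliceEq W' W0) (h2' : FEq C W') : W = W' := by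
  obtain ⟨r, hr, hn, hT⟩ := exists_r h hw0
  rw [eq_RW hs h1, FEq_iff C hs] at h2
  rw [eq_RW hs h1', FEq_iff C hs] at h2'
  rw [eq_RW hs h1, eq_RW hs h1', hT.fixed_unique h2 h2']

end FuchsianCK5

open Real Filter

section FuchsianCK6
open scoped Nat NNReal ENNReal

variable {n : ℕ}

/-- restriction to `s = 0` -/
noncomputable def sl (F : PS (n + 1)) : PS (n + 1) := fun α => if α 0 = 0 then cf α F else 0

lemma cf_sl (F : PS (n + 1)) (α) : cf α (sl F) = if α 0 = 0 then cf α F else 0 := rfl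

lemma mon_slice (p : Fin (n + 1) → ℝ) (α : Fin (n + 1) →₀ ℕ) :
    mon (Function.update p 0 0) α = if α 0 = 0 then mon p α else 0 := by
  unfold mon
  rw [Fin.prod_univ_succ, Fin.prod_univ_succ]
  split_ifs with h
  · simp [h]
  · simp [h]

lemma norm_slice_le (p : Fin (n + 1) → ℝ) : ‖Function.update p 0 0‖ ≤ ‖p‖ := by
  rw [pi_norm_le_iff_of_nonneg (norm_nonneg _)]
  intro i
  by_cases h : i = 0
  · subst h; simp
  · rw [Function.update_of_ne h]; exact norm_le_pi_norm p i

lemma SRep.sl {F : PS (n + 1)} {f} (h : SRep F f) :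
    SRep (sl F) (fun p => f (Function.update p 0 0)) := by
  obtain ⟨r, hr, h⟩ := h
  refine ⟨r, hr, ?_, fun p hp => ?_⟩
  · refine Summable.of_nonneg_of_le (fun α => by positivity) (fun α => ?_) h.1
    rw [cf_sl]
    split_ifs
    · rfl
    · simp; positivity
  · have := h.2 _ ((norm_slice_le p).trans_lt hp)
    convert this using 2 with α
    rw [cf_sl, mon_slice]
    split_ifs <;> simp

lemma sl_noS (F : PS (n + 1)) : NoS (sl F) := fun α h => by rw [cf_sl, if_neg h]

lemma sliceEq_of_sl {F G : PS (n + 1)} (h : sl F = sl G) : SliceEq F G := fun α hα => by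
  have := congrArg (cf α) h
  rwa [cf_sl, cf_sl, if_pos hα, if_pos hα] at this

lemma sl_of_sliceEq {F G : PS (n + 1)} (h : SliceEq F G) : sl F = sl G := cf_ext fun α => by
  rw [cf_sl, cf_sl]
  split_ifs with hα
  · exact h α hα
  · rfl

lemma sliceEq_sl (F : PS (n + 1)) : SliceEq F (sl F) := fun α hα => by rw [cf_sl, if_pos hα]

lemma tendsto_slice : Tendsto (fun p : Fin (n + 1) → ℝ => Function.update p 0 0) (nhds 0)
    (nhds 0) := by
  have : Continuous (fun p : Fin (n + 1) → ℝ => Function.update p 0 0) :=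
    continuous_id.update 0 continuous_const
  have := this.tendsto 0
  simpa using this

/-- division by `s` -/
lemma div_s {q : (Fin (n + 1) → ℝ) → ℝ} (hq : AnalyticAt ℝ q 0)
    (h0 : ∀ᶠ p in nhds 0, q (Function.update p 0 0) = 0) :
    ∃ g, AnalyticAt ℝ g 0 ∧ ∀ᶠ p in nhds 0, q p = p 0 * g p := by
  obtain ⟨Q, hQ⟩ := SRep.of_analyticAt hq
  have hs : sl Q = 0 := hQ.sl.eq_zero h0
  let G : PS (n + 1) := fun β => cf (β + Finsupp.single 0 1) Q
  have hG : ∀ β, cf β G = cf (β + Finsupp.single 0 1) Q := fun _ => rfl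
  have e : Q = MvPowerSeries.X 0 * G := by
    refine cf_ext fun α => ?_
    by_cases h : α 0 = 0
    · rw [cf_X0_zero _ _ h]
      have := congrArg (cf α) hs
      rw [cf_sl, if_pos h] at this
      rw [this]; simp [cf]
    · obtain ⟨β, rfl⟩ := exists_eq_add_single h
      rw [cf_X0_succ, hG]
  have : ∃ r > 0, SumAt G r := by
    obtain ⟨r, hr, h⟩ := hQ
    refine ⟨r, hr, ?_⟩
    have hinj : Function.Injective fun β : Fin (n + 1) →₀ ℕ => β + Finsupp.single 0 1 :=
      fun a b h => add_right_cancel h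
    have h1 := (Summable.comp_injective h.1 hinj).mul_right r⁻¹
    refine h1.congr fun β => ?_
    simp only [Function.comp, map_add, Finsupp.degree_single, pow_succ, hG]
    field_simp
  obtain ⟨r, hr, hGs⟩ := this
  obtain ⟨g, hg⟩ := hGs.exists
  have hg' : SRep G g := ⟨r, hr, hg⟩
  refine ⟨g, hg'.analyticAt, ?_⟩
  have := (SRep.X (0 : Fin (n + 1))).mul hg'
  rw [← e] at this
  exact hQ.eventuallyEq this

structure CoAn (c : (Fin (n + 1) → ℝ) → Co ℝ n) : Prop where
  B : AnalyticAt ℝ (fun p => (c p).B) 0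
  al : AnalyticAt ℝ (fun p => (c p).al) 0
  L : AnalyticAt ℝ (fun p => (c p).L) 0
  A' : AnalyticAt ℝ (fun p => (c p).A') 0
  g : AnalyticAt ℝ (fun p => (c p).g) 0
  d : AnalyticAt ℝ (fun p => (c p).d) 0
  c0 : AnalyticAt ℝ (fun p => (c p).c0) 0
  P : ∀ j, AnalyticAt ℝ (fun p => (c p).P j) 0
  h : ∀ j, AnalyticAt ℝ (fun p => (c p).h j) 0
  l : ∀ j, AnalyticAt ℝ (fun p => (c p).l j) 0
  e : ∀ j k, AnalyticAt ℝ (fun p => (c p).e j k) 0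

lemma CoAn.rep {c : (Fin (n + 1) → ℝ) → Co ℝ n} (h : CoAn c) : ∃ C, CoRep C c := by
  obtain ⟨B, hB⟩ := SRep.of_analyticAt h.B
  obtain ⟨al, hal⟩ := SRep.of_analyticAt h.al
  obtain ⟨L, hL⟩ := SRep.of_analyticAt h.L
  obtain ⟨A', hA'⟩ := SRep.of_analyticAt h.A'
  obtain ⟨g, hg⟩ := SRep.of_analyticAt h.g
  obtain ⟨d, hd⟩ := SRep.of_analyticAt h.d
  obtain ⟨c0, hc0⟩ := SRep.of_analyticAt h.c0
  choose P hP using fun j => SRep.of_analyticAt (h.P j)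
  choose H hH using fun j => SRep.of_analyticAt (h.h j)
  choose l hl using fun j => SRep.of_analyticAt (h.l j)
  choose e he using fun j k => SRep.of_analyticAt (h.e j k)
  exact ⟨⟨B, al, L, A', g, d, c0, P, H, l, e⟩, hB, hal, hL, hA', hg, hd, hc0, hP, hH, hl, he⟩

/-- the reduced equation at a point -/
def Eqn (c : (Fin (n + 1) → ℝ) → Co ℝ n) (w : (Fin (n + 1) → ℝ) → ℝ) (p : Fin (n + 1) → ℝ) : Prop :=
  p 0 * pd 0 (pd 0 w) p + 2 * pd 0 w p =
    EE (c p) (p 0) (pd 0 w p) (fun j => pd j.succ w p) (fun j => p 0 * pd j.succ (pd 0 w) p)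
      (fun j => p 0 * pd j.succ (pd j.succ w) p)

lemma rep_lhs {W : PS (n + 1)} {w} (hw : SRep W w) :
    SRep (MO W) (fun p => p 0 * pd 0 (pd 0 w) p + 2 * pd 0 w p) := by
  unfold MO
  have := ((SRep.X (0 : Fin (n + 1))).mul ((hw.fd 0).fd 0)).add ((SRep.C 2).mul (hw.fd 0))
  convert this using 3
  exact (map_ofNat MvPowerSeries.C 2).symm

lemma rep_rhs {C : Co (PS (n + 1)) n} {c} (h : CoRep C c) {W : PS (n + 1)} {w} (hw : SRep W w) :
    SRep (EE C (MvPowerSeries.X 0) (fd 0 W) (fun j => fd j.succ W)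
      (fun j => MvPowerSeries.X 0 * fd j.succ (fd 0 W))
      (fun j => MvPowerSeries.X 0 * fd j.succ (fd j.succ W)))
     (fun p => EE (c p) (p 0) (pd 0 w p) (fun j => pd j.succ w p)
      (fun j => p 0 * pd j.succ (pd 0 w) p) (fun j => p 0 * pd j.succ (pd j.succ w) p)) :=
  h.EE (SRep.X 0) (hw.fd 0) (fun j => hw.fd j.succ)
    (fun j => (SRep.X 0).mul ((hw.fd 0).fd j.succ))
    (fun j => (SRep.X 0).mul ((hw.fd j.succ).fd j.succ))

lemma half_zero {D : (Fin (n + 1) → ℝ) → ℝ} (hD : AnalyticAt ℝ D 0)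
    (h : ∀ᶠ p in nhds 0, 0 < p 0 → D p = 0) : D =ᶠ[nhds 0] fun _ => 0 := by
  obtain ⟨r, hr, hb⟩ := Metric.eventually_nhds_iff_ball.1 (hD.eventually_analyticAt.and h)
  have han : AnalyticOnNhd ℝ D (Metric.ball 0 r) := fun p hp => (hb p hp).1
  set p1 : Fin (n + 1) → ℝ := Pi.single 0 (r / 2)
  have hp1 : p1 ∈ Metric.ball (0 : Fin (n + 1) → ℝ) r := by
    rw [mem_ball_zero_iff, Pi.norm_single, Real.norm_of_nonneg (by positivity)]
    linarith
  have h1 : D =ᶠ[nhds p1] 0 := by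
    have ho : ∀ᶠ p : Fin (n + 1) → ℝ in nhds p1, 0 < p 0 :=
      ((continuous_apply (0 : Fin (n + 1))).tendsto p1).eventually
        (lt_mem_nhds (by simp [p1]; positivity))
    filter_upwards [ho, Metric.isOpen_ball.mem_nhds hp1] with p h2 h3
    exact (hb p h3).2 h2
  have := han.eqOn_zero_of_preconnected_of_eventuallyEq_zero
    (convex_ball _ _).isPreconnected hp1 h1
  filter_upwards [Metric.ball_mem_nhds 0 hr] with p hp
  exact this hp

theorem local_exists {c : (Fin (n + 1) → ℝ) → Co ℝ n} (hc : CoAn c) {w0}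
    (hw0 : AnalyticAt ℝ w0 0) : ∃ w, AnalyticAt ℝ w 0 ∧
      (∀ᶠ p in nhds 0, w (Function.update p 0 0) = w0 (Function.update p 0 0)) ∧
      ∀ᶠ p in nhds 0, Eqn c w p := by
  obtain ⟨C, hC⟩ := hc.rep
  obtain ⟨W0, hW0⟩ := SRep.of_analyticAt hw0
  obtain ⟨W, w, hW, h1, h2⟩ := formal_exists hC hW0.sl (sl_noS _)
  refine ⟨w, hW.analyticAt, ?_, ?_⟩
  · have e := hW.sl
    have : sl W = sl W0 := cf_ext fun α => by
      rw [cf_sl, cf_sl]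
      split_ifs with hα
      · rw [h1 α hα, cf_sl, if_pos hα]
      · rfl
    rw [this] at e
    exact e.eventuallyEq hW0.sl
  · have e := rep_lhs hW
    rw [show MO W = _ from h2] at e
    exact e.eventuallyEq (rep_rhs hC hW)

theorem local_unique {c : (Fin (n + 1) → ℝ) → Co ℝ n} (hc : CoAn c) {w w'}
    (hw : AnalyticAt ℝ w 0) (hw' : AnalyticAt ℝ w' 0)
    (h0 : ∀ᶠ p in nhds 0, w (Function.update p 0 0) = w' (Function.update p 0 0))
    (h : ∀ᶠ p in nhds 0, 0 < p 0 → Eqn c w p) (h' : ∀ᶠ p in nhds 0, 0 < p 0 → Eqn c w' p) :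
    w =ᶠ[nhds 0] w' := by
  obtain ⟨C, hC⟩ := hc.rep
  obtain ⟨W, hW⟩ := SRep.of_analyticAt hw
  obtain ⟨W', hW'⟩ := SRep.of_analyticAt hw'
  have key : ∀ {W w}, SRep W w → (∀ᶠ p in nhds 0, 0 < p 0 → Eqn c w p) → FEq C W := by
    intro W w hW h
    have e := (rep_lhs hW).sub (rep_rhs hC hW)
    refine sub_eq_zero.1 (e.eq_zero (half_zero e.analyticAt ?_))
    filter_upwards [h] with p hp h2
    rw [hp h2, sub_self]
  have hs := hW.sl.unique hW'.sl h0
  have := formal_unique hC hW.sl (sl_noS _) (sliceEq_sl W) (key hW h)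
    (by rw [hs]; exact sliceEq_sl W') (key hW' h')
  subst this
  exact hW.eventuallyEq hW'

lemma pd_comm {w : (Fin (n + 1) → ℝ) → ℝ} (hw : AnalyticAt ℝ w 0) (i j : Fin (n + 1)) :
    ∀ᶠ p in nhds 0, pd i (pd j w) p = pd j (pd i w) p := by
  obtain ⟨W, hW⟩ := SRep.of_analyticAt hw
  have e : fd i (fd j W) = fd j (fd i W) := by
    refine cf_ext fun α => ?_
    rw [cf_fd, cf_fd, cf_fd, cf_fd, add_right_comm]
    by_cases h : i = j
    · subst h; ring
    · simp only [Finsupp.add_apply, Finsupp.single_eq_of_ne h, Finsupp.single_eq_of_ne (Ne.symm h),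
        add_zero]
      ring
  have h1 := (hW.fd j).fd i
  rw [e] at h1
  exact h1.eventuallyEq ((hW.fd i).fd j)

end FuchsianCK6

open Real Filter

section FuchsianCK7

variable {n : ℕ}

lemma hasDerivAt_pd {N : ℕ} {g : (Fin N → ℝ) → ℝ} {p : Fin N → ℝ} (hg : DifferentiableAt ℝ g p)
    (j : Fin N) : HasDerivAt (fun y => g (Function.update p j y)) (pd j g p) (p j) := by
  have h1 : DifferentiableAt ℝ (fun y => g (Function.update p j y)) (p j) := by
    refine DifferentiableAt.comp (p j) (g := g) ?_ (hasDerivAt_update p j (p j)).differentiableAt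
    rwa [Function.update_eq_self]
  exact h1.hasDerivAt

lemma pd_eq_fderiv {N : ℕ} {g : (Fin N → ℝ) → ℝ} {p : Fin N → ℝ} (hg : DifferentiableAt ℝ g p)
    (j : Fin N) : pd j g p = fderiv ℝ g p (Pi.single j 1) := by
  have h0 : HasFDerivAt g (fderiv ℝ g p) (Function.update p j (p j)) := by
    rw [Function.update_eq_self]; exact hg.hasFDerivAt
  exact (h0.comp_hasDerivAt (p j) (hasDerivAt_update p j (p j))).deriv

lemma analyticAt_pd {N : ℕ} {g : (Fin N → ℝ) → ℝ} {p : Fin N → ℝ} (hg : AnalyticAt ℝ g p)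
    (j : Fin N) : AnalyticAt ℝ (pd j g) p := by
  have h1 : AnalyticAt ℝ (fun q => fderiv ℝ g q (Pi.single j 1)) p :=
    ((ContinuousLinearMap.apply ℝ ℝ (Pi.single j 1 : Fin N → ℝ)).analyticAt _).comp hg.fderiv
  refine h1.congr ?_
  filter_upwards [hg.eventually_analyticAt] with q hq
  exact (pd_eq_fderiv hq.differentiableAt j).symm

/-- straightened coordinates -/
def Sc (x0 : Fin n → ℝ) (ψ : (Fin n → ℝ) → ℝ) (t : ℝ) (x : Fin n → ℝ) : Fin (n + 1) → ℝ :=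
  Fin.cons (t - ψ x) (fun i => x i - x0 i)

def Xp (x0 : Fin n → ℝ) (p : Fin (n + 1) → ℝ) : Fin n → ℝ := fun i => x0 i + p i.succ

def Tp (x0 : Fin n → ℝ) (ψ : (Fin n → ℝ) → ℝ) (p : Fin (n + 1) → ℝ) : ℝ := p 0 + ψ (Xp x0 p)

lemma Xp_Sc (x0 ψ) (t : ℝ) (x : Fin n → ℝ) : Xp x0 (Sc x0 ψ t x) = x := by
  ext i; simp [Xp, Sc]

lemma Tp_Sc (x0 ψ) (t : ℝ) (x : Fin n → ℝ) : Tp x0 ψ (Sc x0 ψ t x) = t := by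
  rw [Tp, Xp_Sc]; simp [Sc]

lemma Sc_Tp (x0 ψ) (p : Fin (n + 1) → ℝ) : Sc x0 ψ (Tp x0 ψ p) (Xp x0 p) = p := by
  ext i
  refine Fin.cases ?_ (fun i => ?_) i
  · simp [Sc, Tp]
  · simp [Sc, Xp]

lemma Xp_zero (x0 : Fin n → ℝ) : Xp x0 0 = x0 := by ext i; simp [Xp]

lemma Xp_update0 (x0 : Fin n → ℝ) (p : Fin (n + 1) → ℝ) (y : ℝ) :
    Xp x0 (Function.update p 0 y) = Xp x0 p := by
  ext i; simp [Xp]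

lemma analyticAt_Xp (x0 : Fin n → ℝ) (p : Fin (n + 1) → ℝ) : AnalyticAt ℝ (Xp x0) p := by
  refine AnalyticAt.pi fun i => ?_
  exact analyticAt_const.add ((ContinuousLinearMap.proj (R := ℝ) (φ := fun _ : Fin (n + 1) => ℝ)
    i.succ).analyticAt p)

lemma analyticAt_coord {N : ℕ} (i : Fin N) (p : Fin N → ℝ) :
    AnalyticAt ℝ (fun p : Fin N → ℝ => p i) p :=
  (ContinuousLinearMap.proj (R := ℝ) (φ := fun _ : Fin N => ℝ) i).analyticAt p

lemma analyticAt_Tp {x0 : Fin n → ℝ} {ψ : (Fin n → ℝ) → ℝ} {p : Fin (n + 1) → ℝ}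
    (hψ : AnalyticAt ℝ ψ (Xp x0 p)) : AnalyticAt ℝ (Tp x0 ψ) p :=
  (analyticAt_coord 0 p).add (hψ.comp (analyticAt_Xp x0 p))

lemma chain_t {x0 : Fin n → ℝ} {ψ : (Fin n → ℝ) → ℝ} {p : Fin (n + 1) → ℝ}
    {u : ℝ → (Fin n → ℝ) → ℝ} {g : (Fin (n + 1) → ℝ) → ℝ} (hg : DifferentiableAt ℝ g p)
    (hu : ∀ᶠ q in nhds p, u (Tp x0 ψ q) (Xp x0 q) = g q) :
    ptd u (Tp x0 ψ p) (Xp x0 p) = pd 0 g p := by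
  unfold ptd
  set t := Tp x0 ψ p with ht
  set x := Xp x0 p with hx
  have hS : Sc x0 ψ t x = p := Sc_Tp x0 ψ p
  have hc : HasDerivAt (fun s => Sc x0 ψ s x) (Pi.single 0 1) t := by
    rw [hasDerivAt_pi]
    intro i
    refine Fin.cases ?_ (fun i => ?_) i
    · simpa [Sc] using (hasDerivAt_id t).sub_const (ψ x)
    · simpa [Sc] using hasDerivAt_const t (x i - x0 i)
  have hg' : HasFDerivAt g (fderiv ℝ g p) (Sc x0 ψ t x) := by rw [hS]; exact hg.hasFDerivAt
  have h1 := hg'.comp_hasDerivAt t hc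
  have h2 : (fun s => u s x) =ᶠ[nhds t] g ∘ fun s => Sc x0 ψ s x := by
    have := hc.continuousAt.tendsto
    rw [hS] at this
    filter_upwards [this.eventually hu] with s hs
    rw [Tp_Sc, Xp_Sc] at hs
    exact hs
  rw [h2.deriv_eq, h1.deriv, pd_eq_fderiv hg]

lemma chain_x {x0 : Fin n → ℝ} {ψ : (Fin n → ℝ) → ℝ} {p : Fin (n + 1) → ℝ}
    (hψ : DifferentiableAt ℝ ψ (Xp x0 p))
    {u : ℝ → (Fin n → ℝ) → ℝ} {g : (Fin (n + 1) → ℝ) → ℝ} (hg : DifferentiableAt ℝ g p)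
    (hu : ∀ᶠ q in nhds p, u (Tp x0 ψ q) (Xp x0 q) = g q) (i : Fin n) :
    pxd i u (Tp x0 ψ p) (Xp x0 p) = pd i.succ g p - gradp ψ (Xp x0 p) i * pd 0 g p := by
  unfold pxd
  set t := Tp x0 ψ p with ht
  set x := Xp x0 p with hx
  have hS : Sc x0 ψ t x = p := Sc_Tp x0 ψ p
  have hc : HasDerivAt (fun y => Sc x0 ψ t (Function.update x i y))
      (Pi.single i.succ 1 - gradp ψ x i • Pi.single 0 1) (x i) := by
    rw [hasDerivAt_pi]
    intro k
    refine Fin.cases ?_ (fun k => ?_) k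
    · have := (hasDerivAt_pd hψ i).const_sub t
      rw [show pd i ψ x = gradp ψ x i from rfl] at this
      simpa [Sc] using this
    · have := ((hasDerivAt_pi.1 (hasDerivAt_update x i (x i))) k).sub_const (x0 k)
      simpa [Sc, Pi.single_apply] using this
  have hS' : Sc x0 ψ t (Function.update x i (x i)) = p := by rw [Function.update_eq_self, hS]
  have hg' : HasFDerivAt g (fderiv ℝ g p) (Sc x0 ψ t (Function.update x i (x i))) := by
    rw [hS']; exact hg.hasFDerivAt
  have h1 := hg'.comp_hasDerivAt (x i) hc
  have h2 : (fun y => u t (Function.update x i y)) =ᶠ[nhds (x i)]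
      g ∘ fun y => Sc x0 ψ t (Function.update x i y) := by
    have := hc.continuousAt.tendsto
    rw [hS'] at this
    filter_upwards [this.eventually hu] with s hs
    rw [Tp_Sc, Xp_Sc] at hs
    exact hs
  rw [h2.deriv_eq, h1.deriv, pd_eq_fderiv hg, pd_eq_fderiv hg, map_sub, map_smul, smul_eq_mul]

lemma pd_mul {N : ℕ} {f g : (Fin N → ℝ) → ℝ} {p : Fin N → ℝ} (hf : DifferentiableAt ℝ f p)
    (hg : DifferentiableAt ℝ g p) (j : Fin N) :
    pd j (fun q => f q * g q) p = pd j f p * g p + f p * pd j g p := by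
  have := ((hasDerivAt_pd hf j).mul (hasDerivAt_pd hg j)).deriv
  simp only [Function.update_eq_self] at this
  exact this

lemma pd_sub {N : ℕ} {f g : (Fin N → ℝ) → ℝ} {p : Fin N → ℝ} (hf : DifferentiableAt ℝ f p)
    (hg : DifferentiableAt ℝ g p) (j : Fin N) :
    pd j (fun q => f q - g q) p = pd j f p - pd j g p :=
  ((hasDerivAt_pd hf j).sub (hasDerivAt_pd hg j)).deriv

lemma pd_add {N : ℕ} {f g : (Fin N → ℝ) → ℝ} {p : Fin N → ℝ} (hf : DifferentiableAt ℝ f p)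
    (hg : DifferentiableAt ℝ g p) (j : Fin N) :
    pd j (fun q => f q + g q) p = pd j f p + pd j g p :=
  ((hasDerivAt_pd hf j).add (hasDerivAt_pd hg j)).deriv

lemma pd_indep0 {f : (Fin (n + 1) → ℝ) → ℝ} (h : ∀ p y, f (Function.update p 0 y) = f p)
    (p : Fin (n + 1) → ℝ) : pd 0 f p = 0 := by
  unfold pd; simp [h]

/-- gradient components in straightened coordinates -/
noncomputable def gp (x0 : Fin n → ℝ) (ψ : (Fin n → ℝ) → ℝ) (i : Fin n) (p : Fin (n + 1) → ℝ) : ℝ :=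
  gradp ψ (Xp x0 p) i

lemma analyticAt_gp {x0 : Fin n → ℝ} {ψ : (Fin n → ℝ) → ℝ} {p : Fin (n + 1) → ℝ}
    (hψ : AnalyticAt ℝ ψ (Xp x0 p)) (i : Fin n) : AnalyticAt ℝ (gp x0 ψ i) p := by
  have : AnalyticAt ℝ (pd i ψ) (Xp x0 p) := analyticAt_pd hψ i
  exact this.comp (analyticAt_Xp x0 p)

structure Good (x0 : Fin n → ℝ) (ψ : (Fin n → ℝ) → ℝ) (v : ℝ → (Fin n → ℝ) → ℝ)
    (w : (Fin (n + 1) → ℝ) → ℝ) (p : Fin (n + 1) → ℝ) : Prop where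
  hw : AnalyticAt ℝ w p
  psi : AnalyticAt ℝ ψ (Xp x0 p)
  hv : ∀ᶠ q in nhds p, v (Tp x0 ψ q) (Xp x0 q) = w q
  pos : 0 < p 0

lemma Good.ev {x0 : Fin n → ℝ} {ψ : (Fin n → ℝ) → ℝ} {v : ℝ → (Fin n → ℝ) → ℝ}
    {w : (Fin (n + 1) → ℝ) → ℝ} {p : Fin (n + 1) → ℝ} (h : Good x0 ψ v w p) :
    ∀ᶠ q in nhds p, Good x0 ψ v w q := by
  filter_upwards [h.hw.eventually_analyticAt,
    (analyticAt_Xp x0 p).continuousAt.tendsto.eventually h.psi.eventually_analyticAt,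
    h.hv.eventually_nhds,
    ((continuous_apply (0 : Fin (n + 1))).tendsto p).eventually (lt_mem_nhds h.pos)]
    with q h1 h2 h3 h4
  exact ⟨h1, h2, h3, h4⟩

/-- `∂ₜ u` in straightened coordinates -/
noncomputable def H0 (a : ℝ) (w : (Fin (n + 1) → ℝ) → ℝ) (p : Fin (n + 1) → ℝ) : ℝ :=
  -a / p 0 + pd 0 w p

noncomputable def Hi (x0 : Fin n → ℝ) (ψ : (Fin n → ℝ) → ℝ) (a : ℝ) (w : (Fin (n + 1) → ℝ) → ℝ)
    (i : Fin n) (p : Fin (n + 1) → ℝ) : ℝ := pd i.succ w p - gp x0 ψ i p * H0 a w p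

section
variable {x0 : Fin n → ℝ} {ψ : (Fin n → ℝ) → ℝ} {v : ℝ → (Fin n → ℝ) → ℝ}
    {w : (Fin (n + 1) → ℝ) → ℝ} {p : Fin (n + 1) → ℝ}

lemma diff_log (a : ℝ) (hp : 0 < p 0) :
    DifferentiableAt ℝ (fun p : Fin (n + 1) → ℝ => -a * Real.log (p 0)) p := by
  refine DifferentiableAt.const_mul ?_ _
  exact (differentiableAt_apply (0 : Fin (n + 1)) p).log hp.ne'

lemma pd0_log (a : ℝ) (hp : 0 < p 0) :
    pd 0 (fun p : Fin (n + 1) → ℝ => -a * Real.log (p 0)) p = -a / p 0 := by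
  unfold pd
  simp only [Function.update_self]
  rw [((Real.hasDerivAt_log hp.ne').const_mul (-a)).deriv, div_eq_mul_inv]

lemma pdi_log (a : ℝ) (i : Fin n) :
    pd i.succ (fun p : Fin (n + 1) → ℝ => -a * Real.log (p 0)) p = 0 := by
  unfold pd
  simp [Function.update_of_ne (Fin.succ_ne_zero i).symm]

lemma diff_inv (a : ℝ) (hp : 0 < p 0) :
    DifferentiableAt ℝ (fun p : Fin (n + 1) → ℝ => -a / p 0) p := by
  simp only [div_eq_mul_inv]
  have h1 : DifferentiableAt ℝ (fun p : Fin (n + 1) → ℝ => p 0) p :=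
    differentiableAt_apply (0 : Fin (n + 1)) p
  exact (DifferentiableAt.fun_inv (h := fun p : Fin (n + 1) → ℝ => p 0) h1 hp.ne').const_mul _

lemma pd0_inv (a : ℝ) (hp : 0 < p 0) :
    pd 0 (fun p : Fin (n + 1) → ℝ => -a / p 0) p = a / p 0 ^ 2 := by
  unfold pd
  simp only [Function.update_self]
  rw [(HasDerivAt.fun_div (hasDerivAt_const (p 0) (-a)) (hasDerivAt_id' (p 0)) hp.ne').deriv]
  simp

lemma pdi_inv (a : ℝ) (i : Fin n) :
    pd i.succ (fun p : Fin (n + 1) → ℝ => -a / p 0) p = 0 := by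
  unfold pd
  simp [Function.update_of_ne (Fin.succ_ne_zero i).symm]

lemma Good.u (h : Good x0 ψ v w p) (a : ℝ) : ∀ᶠ q in nhds p,
    (fun t x => -a * Real.log (t - ψ x) + v t x) (Tp x0 ψ q) (Xp x0 q) =
      -a * Real.log (q 0) + w q := by
  filter_upwards [h.hv] with q hq
  simp only [hq]
  simp [Tp]

lemma Good.ptd (h : Good x0 ψ v w p) (a : ℝ) :
    ptd (fun t x => -a * Real.log (t - ψ x) + v t x) (Tp x0 ψ p) (Xp x0 p) = H0 a w p := by
  rw [chain_t (DifferentiableAt.fun_add (diff_log a h.pos) h.hw.differentiableAt) (h.u a),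
    pd_add (diff_log a h.pos) h.hw.differentiableAt, pd0_log a h.pos, H0]

lemma Good.pxd (h : Good x0 ψ v w p) (a : ℝ) (i : Fin n) :
    pxd i (fun t x => -a * Real.log (t - ψ x) + v t x) (Tp x0 ψ p) (Xp x0 p) = Hi x0 ψ a w i p := by
  rw [chain_x h.psi.differentiableAt (DifferentiableAt.fun_add (diff_log a h.pos) h.hw.differentiableAt) (h.u a) i,
    pd_add (diff_log a h.pos) h.hw.differentiableAt,
    pd_add (diff_log a h.pos) h.hw.differentiableAt, pd0_log a h.pos, pdi_log, zero_add]
  rfl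

lemma Good.diffH0 (h : Good x0 ψ v w p) (a : ℝ) : DifferentiableAt ℝ (H0 a w) p :=
  (diff_inv a h.pos).add (analyticAt_pd h.hw 0).differentiableAt

lemma Good.pd0H0 (h : Good x0 ψ v w p) (a : ℝ) :
    pd 0 (H0 a w) p = a / p 0 ^ 2 + pd 0 (pd 0 w) p := by
  unfold H0
  rw [pd_add (diff_inv a h.pos) (analyticAt_pd h.hw 0).differentiableAt, pd0_inv a h.pos]

lemma Good.pdiH0 (h : Good x0 ψ v w p) (a : ℝ) (i : Fin n) :
    pd i.succ (H0 a w) p = pd i.succ (pd 0 w) p := by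
  unfold H0
  rw [pd_add (diff_inv a h.pos) (analyticAt_pd h.hw 0).differentiableAt, pdi_inv, zero_add]

lemma Good.ptd2 (h : Good x0 ψ v w p) (a : ℝ) :
    _root_.ptd (_root_.ptd (fun t x => -a * Real.log (t - ψ x) + v t x)) (Tp x0 ψ p) (Xp x0 p) =
      a / p 0 ^ 2 + pd 0 (pd 0 w) p := by
  rw [chain_t (h.diffH0 a) (h.ev.mono fun q hq => hq.ptd a), h.pd0H0]

lemma Good.pxd2 (h : Good x0 ψ v w p) (a : ℝ) (i : Fin n) :
    _root_.pxd i (_root_.pxd i (fun t x => -a * Real.log (t - ψ x) + v t x)) (Tp x0 ψ p)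
      (Xp x0 p) =
      pd i.succ (pd i.succ w) p - (pd i.succ (gp x0 ψ i) p * H0 a w p +
        gp x0 ψ i p * pd i.succ (pd 0 w) p) -
      gp x0 ψ i p * (pd 0 (pd i.succ w) p - gp x0 ψ i p * (a / p 0 ^ 2 + pd 0 (pd 0 w) p)) := by
  have d1 := (analyticAt_pd h.hw i.succ).differentiableAt
  have d2 := (analyticAt_gp h.psi i).differentiableAt
  have d3 : DifferentiableAt ℝ (fun q => gp x0 ψ i q * H0 a w q) p := d2.mul (h.diffH0 a)
  have d4 : DifferentiableAt ℝ (Hi x0 ψ a w i) p := d1.sub d3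
  have e0 : pd 0 (gp x0 ψ i) p = 0 := pd_indep0 (fun q y => by unfold gp; rw [Xp_update0]) p
  rw [chain_x h.psi.differentiableAt d4 (h.ev.mono fun q hq => hq.pxd a i) i]
  unfold Hi
  rw [pd_sub d1 d3, pd_sub d1 d3, pd_mul d2 (h.diffH0 a), pd_mul d2 (h.diffH0 a), e0, h.pd0H0,
    h.pdiH0, zero_mul, zero_add]
  rfl

end

end FuchsianCK7

open Real Filter

section FuchsianCK8

variable {n : ℕ}

lemma homog2 {U : Set (ℝ × (Fin n → ℝ))} {f : ℝ → (Fin n → ℝ) → ℝ → (Fin n → ℝ) → ℝ}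
    (h : HomogPoly 2 U f) : ∃ c : Fin (n + 1) → Fin (n + 1) → ℝ → (Fin n → ℝ) → ℝ,
      (∀ j k, AnalyticOnNhd ℝ (fun p : ℝ × (Fin n → ℝ) => c j k p.1 p.2) U) ∧
      ∀ t x τ ξ, f t x τ ξ = ∑ j, ∑ k, c j k t x *
        ((Fin.cons τ ξ : Fin (n + 1) → ℝ) j * (Fin.cons τ ξ : Fin (n + 1) → ℝ) k) := by
  obtain ⟨c, hc, h⟩ := h
  refine ⟨fun j k => c ![j, k], fun j k => hc _, fun t x τ ξ => ?_⟩
  rw [h, ← Fintype.sum_prod_type' (f := fun j k => c ![j, k] t x *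
        ((Fin.cons τ ξ : Fin (n + 1) → ℝ) j * (Fin.cons τ ξ : Fin (n + 1) → ℝ) k))]
  refine Fintype.sum_equiv (finTwoArrowEquiv _) _ _ fun μ => ?_
  rw [Fin.prod_univ_two]
  have : ![μ 0, μ 1] = μ := by ext i; fin_cases i <;> rfl
  simp [this]

lemma homog1 {U : Set (ℝ × (Fin n → ℝ))} {f : ℝ → (Fin n → ℝ) → ℝ → (Fin n → ℝ) → ℝ}
    (h : HomogPoly 1 U f) : ∃ c : Fin (n + 1) → ℝ → (Fin n → ℝ) → ℝ,
      (∀ j, AnalyticOnNhd ℝ (fun p : ℝ × (Fin n → ℝ) => c j p.1 p.2) U) ∧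
      ∀ t x τ ξ, f t x τ ξ = ∑ j, c j t x * (Fin.cons τ ξ : Fin (n + 1) → ℝ) j := by
  obtain ⟨c, hc, h⟩ := h
  refine ⟨fun j => c (fun _ => j), fun j => hc _, fun t x τ ξ => ?_⟩
  rw [h]
  refine Fintype.sum_equiv (Equiv.funUnique (Fin 1) (Fin (n + 1))) _ _ fun μ => ?_
  have : (fun _ => μ 0) = μ := by ext i; fin_cases i; rfl
  simp [this]

lemma homog0 {U : Set (ℝ × (Fin n → ℝ))} {f : ℝ → (Fin n → ℝ) → ℝ → (Fin n → ℝ) → ℝ}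
    (h : HomogPoly 0 U f) : ∃ c : ℝ → (Fin n → ℝ) → ℝ,
      (AnalyticOnNhd ℝ (fun p : ℝ × (Fin n → ℝ) => c p.1 p.2) U) ∧
      ∀ t x τ ξ, f t x τ ξ = c t x := by
  obtain ⟨c, hc, h⟩ := h
  refine ⟨c default, hc _, fun t x τ ξ => ?_⟩
  rw [h]
  simp only [Finset.univ_unique, Finset.sum_singleton, Finset.univ_eq_empty, Finset.prod_empty,
    mul_one]
  exact congrArg (fun μ => c μ t x) (Subsingleton.elim _ _)

lemma quad_expand (q : Fin (n + 1) → Fin (n + 1) → ℝ) (P : Fin (n + 1) → ℝ) (w : Fin n → ℝ)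
    (κ : ℝ) (V : Fin (n + 1) → ℝ)
    (hV : ∀ j, V j = κ * P j + (Fin.cons 0 w : Fin (n + 1) → ℝ) j) :
    ∑ j, ∑ k, q j k * (V j * V k) = κ ^ 2 * (∑ j, ∑ k, q j k * (P j * P k)) +
      κ * (∑ j : Fin n, (∑ k, (q k j.succ + q j.succ k) * P k) * w j) +
      ∑ j : Fin n, ∑ k : Fin n, q j.succ k.succ * (w j * w k) := by
  set m : Fin (n + 1) → ℝ := Fin.cons 0 w with hm
  have h1 : ∑ j, ∑ k, q j k * (V j * V k) = κ ^ 2 * (∑ j, ∑ k, q j k * (P j * P k)) +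
      κ * (∑ j, ∑ k, q k j * P k * m j) + κ * (∑ j, ∑ k, q j k * P k * m j) +
      ∑ j, ∑ k, q j k * (m j * m k) := by
    rw [Finset.sum_comm (f := fun j k => q k j * P k * m j)]
    simp only [Finset.mul_sum, ← Finset.sum_add_distrib]
    refine Finset.sum_congr rfl fun j _ => Finset.sum_congr rfl fun k _ => ?_
    rw [hV, hV]; ring
  rw [h1, add_assoc (κ ^ 2 * _), ← mul_add, ← Finset.sum_add_distrib]
  congr 1
  · congr 2
    rw [Fin.sum_univ_succ]
    simp only [hm, Fin.cons_zero, Fin.cons_succ, mul_zero, Finset.sum_const_zero, add_zero, zero_add]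
    refine Finset.sum_congr rfl fun j _ => ?_
    rw [← Finset.sum_add_distrib, Finset.sum_mul]
    refine Finset.sum_congr rfl fun k _ => by ring
  · rw [Fin.sum_univ_succ]
    simp only [hm, Fin.cons_zero, zero_mul, mul_zero, Finset.sum_const_zero, zero_add]
    refine Finset.sum_congr rfl fun j _ => ?_
    rw [Fin.sum_univ_succ]
    simp

lemma alg_key (s a w0 w00 g A X1 X2 L H M D l q0 : ℝ) (hs : s ≠ 0) (ha : a ≠ 0) (hA : A ≠ 0) :
    (a / s ^ 2 + w00) - (X1 - L * (-a / s + w0) - 2 * X2 + (1 - A) * (a / s ^ 2 + w00)) =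
      (a / s - w0) ^ 2 * (A / a + s * g) + (a / s - w0) * H + M + ((a / s - w0) * D + l) + q0 ↔
    s * w00 + 2 * w0 = A⁻¹ * (a * L + s * X1 - s * (L * w0) - 2 * s * X2
      + A / a * (s * (w0 * w0)) + (a - s * w0) * (a - s * w0) * g + (a - s * w0) * H + s * M
      + (a - s * w0) * D + s * l + s * q0) := by
  rw [← sub_eq_zero, ← sub_eq_zero (a := s * w00 + 2 * w0)]
  have key : (a / s ^ 2 + w00) - (X1 - L * (-a / s + w0) - 2 * X2 + (1 - A) * (a / s ^ 2 + w00)) -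
      ((a / s - w0) ^ 2 * (A / a + s * g) + (a / s - w0) * H + M + ((a / s - w0) * D + l) + q0) =
      A / s * (s * w00 + 2 * w0 - A⁻¹ * (a * L + s * X1 - s * (L * w0) - 2 * s * X2
      + A / a * (s * (w0 * w0)) + (a - s * w0) * (a - s * w0) * g + (a - s * w0) * H + s * M
      + (a - s * w0) * D + s * l + s * q0)) := by
    field_simp
    ring
  rw [key, mul_eq_zero]
  constructor
  · rintro (h | h)
    · exact absurd h (div_ne_zero hA hs)
    · exact h
  · exact Or.inr

lemma alg (q : Fin (n + 1) → Fin (n + 1) → ℝ) (q1 : Fin (n + 1) → ℝ) (q0 : ℝ)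
    (ψ w w0i wii Li : Fin n → ℝ) (s a w0 w00 g A : ℝ) (hs : s ≠ 0) (ha : a ≠ 0) (hA : A ≠ 0)
    (hAd : A = 1 - ∑ i, ψ i ^ 2) (P V : Fin (n + 1) → ℝ) (hP : P = Fin.cons (-1) ψ)
    (hV : V = Fin.cons (-a / s + w0) fun i => w i - ψ i * (-a / s + w0))
    (hQ : ∑ j, ∑ k, q j k * (P j * P k) = A / a + s * g) :
    ((a / s ^ 2 + w00) - ∑ i, (wii i - (Li i * (-a / s + w0) + ψ i * w0i i) -
        ψ i * (w0i i - ψ i * (a / s ^ 2 + w00))) =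
      ∑ j, ∑ k, q j k * (V j * V k) + ∑ j, q1 j * V j + q0) ↔
    s * w00 + 2 * w0 = EE (⟨A⁻¹, a, ∑ i, Li i, A / a, g, ∑ j, q1 j * P j, q0, ψ,
      fun j => ∑ k, (q k j.succ + q j.succ k) * P k, fun j => q1 j.succ,
      fun j k => q j.succ k.succ⟩ : Co ℝ n) s w0 w (fun j => s * w0i j) (fun j => s * wii j) := by
  have hV' : ∀ j, V j = (a / s - w0) * P j + (Fin.cons 0 w : Fin (n + 1) → ℝ) j := by
    intro j
    rw [hV, hP]
    refine Fin.cases ?_ (fun i => ?_) j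
    · simp; ring
    · simp; ring
  rw [quad_expand q P w _ V hV', hQ]
  have e1 : ∑ j, q1 j * V j = (a / s - w0) * (∑ j, q1 j * P j) + ∑ j : Fin n, q1 j.succ * w j := by
    have : ∑ j : Fin n, q1 j.succ * w j = ∑ j, q1 j * (Fin.cons 0 w : Fin (n + 1) → ℝ) j := by
      rw [Fin.sum_univ_succ]; simp
    rw [this, Finset.mul_sum, ← Finset.sum_add_distrib]
    refine Finset.sum_congr rfl fun j _ => ?_
    rw [hV']; ring
  have e2 : ∑ i, (wii i - (Li i * (-a / s + w0) + ψ i * w0i i) -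
        ψ i * (w0i i - ψ i * (a / s ^ 2 + w00))) = ∑ i, wii i - (∑ i, Li i) * (-a / s + w0) -
        2 * (∑ i, ψ i * w0i i) + (1 - A) * (a / s ^ 2 + w00) := by
    rw [hAd, sub_sub_cancel, Finset.sum_mul, Finset.sum_mul, Finset.mul_sum,
      ← Finset.sum_sub_distrib, ← Finset.sum_sub_distrib, ← Finset.sum_add_distrib]
    refine Finset.sum_congr rfl fun i _ => ?_
    ring
  rw [e1, e2, alg_key _ _ _ _ _ _ _ _ _ _ _ _ _ _ hs ha hA]
  unfold EE
  have e3 : ∑ j, s * wii j = s * ∑ j, wii j := by rw [Finset.mul_sum]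
  have e4 : ∑ j, (ψ j * (s * w0i j) + ψ j * (s * w0i j)) = 2 * s * ∑ j, ψ j * w0i j := by
    rw [Finset.mul_sum]
    exact Finset.sum_congr rfl fun i _ => by ring
  have e5 : ∑ j : Fin n, ∑ k : Fin n, q j.succ k.succ * (s * (w j * w k)) =
      s * ∑ j : Fin n, ∑ k : Fin n, q j.succ k.succ * (w j * w k) := by
    simp only [Finset.mul_sum]
    exact Finset.sum_congr rfl fun i _ => Finset.sum_congr rfl fun j _ => by ring
  simp only [e3, e4, e5]

/-- conormal vector -/
noncomputable def pv (x0 : Fin n → ℝ) (ψ : (Fin n → ℝ) → ℝ) (p : Fin (n + 1) → ℝ) :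
    Fin (n + 1) → ℝ := Fin.cons (-1) fun i => gp x0 ψ i p

noncomputable def Af (x0 : Fin n → ℝ) (ψ : (Fin n → ℝ) → ℝ) (p : Fin (n + 1) → ℝ) : ℝ :=
  1 - ∑ i, gp x0 ψ i p ^ 2

noncomputable def coef (x0 : Fin n → ℝ) (ψ : (Fin n → ℝ) → ℝ) (a : ℝ)
    (c2 : Fin (n + 1) → Fin (n + 1) → ℝ → (Fin n → ℝ) → ℝ)
    (c1 : Fin (n + 1) → ℝ → (Fin n → ℝ) → ℝ) (c0 : ℝ → (Fin n → ℝ) → ℝ)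
    (g : (Fin (n + 1) → ℝ) → ℝ) (p : Fin (n + 1) → ℝ) : Co ℝ n :=
  ⟨(Af x0 ψ p)⁻¹, a, ∑ i : Fin n, pd i.succ (gp x0 ψ i) p, Af x0 ψ p / a, g p,
    ∑ j, c1 j (Tp x0 ψ p) (Xp x0 p) * pv x0 ψ p j, c0 (Tp x0 ψ p) (Xp x0 p),
    fun i => gp x0 ψ i p,
    fun j => ∑ k, (c2 k j.succ (Tp x0 ψ p) (Xp x0 p) + c2 j.succ k (Tp x0 ψ p) (Xp x0 p)) *
      pv x0 ψ p k,
    fun j => c1 j.succ (Tp x0 ψ p) (Xp x0 p),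
    fun j k => c2 j.succ k.succ (Tp x0 ψ p) (Xp x0 p)⟩

section
variable {x0 : Fin n → ℝ} {ψ : (Fin n → ℝ) → ℝ} {a : ℝ}
    {c2 : Fin (n + 1) → Fin (n + 1) → ℝ → (Fin n → ℝ) → ℝ}
    {c1 : Fin (n + 1) → ℝ → (Fin n → ℝ) → ℝ} {c0 : ℝ → (Fin n → ℝ) → ℝ}
    {f₂ f₁ f₀ : ℝ → (Fin n → ℝ) → ℝ → (Fin n → ℝ) → ℝ}

/-- the wave equation at one point -/
def WaveAt (f₂ f₁ f₀ : ℝ → (Fin n → ℝ) → ℝ → (Fin n → ℝ) → ℝ) (u : ℝ → (Fin n → ℝ) → ℝ)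
    (t : ℝ) (x : Fin n → ℝ) : Prop :=
  ptd (ptd u) t x - lapx u t x =
      f₂ t x (ptd u t x) (gradx u t x) + f₁ t x (ptd u t x) (gradx u t x)
        + f₀ t x (ptd u t x) (gradx u t x)

lemma wave_iff (ha : a ≠ 0) {v : ℝ → (Fin n → ℝ) → ℝ} {w g : (Fin (n + 1) → ℝ) → ℝ}
    {p : Fin (n + 1) → ℝ}
    (h2 : ∀ t x τ ξ, f₂ t x τ ξ = ∑ j, ∑ k, c2 j k t x *
        ((Fin.cons τ ξ : Fin (n + 1) → ℝ) j * (Fin.cons τ ξ : Fin (n + 1) → ℝ) k))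
    (h1 : ∀ t x τ ξ, f₁ t x τ ξ = ∑ j, c1 j t x * (Fin.cons τ ξ : Fin (n + 1) → ℝ) j)
    (h0 : ∀ t x τ ξ, f₀ t x τ ξ = c0 t x)
    (h : Good x0 ψ v w p) (hA : Af x0 ψ p ≠ 0)
    (hsymm : ∀ i : Fin n, pd 0 (pd i.succ w) p = pd i.succ (pd 0 w) p)
    (hg : ∑ j, ∑ k, c2 j k (Tp x0 ψ p) (Xp x0 p) * (pv x0 ψ p j * pv x0 ψ p k) =
      Af x0 ψ p / a + p 0 * g p) :
    WaveAt f₂ f₁ f₀ (fun t x => -a * Real.log (t - ψ x) + v t x) (Tp x0 ψ p) (Xp x0 p) ↔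
      Eqn (coef x0 ψ a c2 c1 c0 g) w p := by
  unfold WaveAt Eqn lapx
  rw [h.ptd2, h.ptd]
  have e : gradx (fun t x => -a * Real.log (t - ψ x) + v t x) (Tp x0 ψ p) (Xp x0 p) =
      fun i => pd i.succ w p - gp x0 ψ i p * (-a / p 0 + pd 0 w p) := by
    ext i
    exact h.pxd a i
  rw [e, h2, h1, h0]
  have e2 : ∀ i, pxd i (pxd i (fun t x => -a * Real.log (t - ψ x) + v t x)) (Tp x0 ψ p)
      (Xp x0 p) = pd i.succ (pd i.succ w) p - (pd i.succ (gp x0 ψ i) p * (-a / p 0 + pd 0 w p) +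
        gp x0 ψ i p * pd i.succ (pd 0 w) p) -
      gp x0 ψ i p * (pd i.succ (pd 0 w) p - gp x0 ψ i p * (a / p 0 ^ 2 + pd 0 (pd 0 w) p)) := by
    intro i
    rw [h.pxd2, hsymm]; rfl
  simp only [e2]
  exact alg (fun j k => c2 j k (Tp x0 ψ p) (Xp x0 p)) (fun j => c1 j (Tp x0 ψ p) (Xp x0 p))
    (c0 (Tp x0 ψ p) (Xp x0 p)) (fun i => gp x0 ψ i p) (fun i => pd i.succ w p)
    (fun i => pd i.succ (pd 0 w) p) (fun i => pd i.succ (pd i.succ w) p)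
    (fun i => pd i.succ (gp x0 ψ i) p) (p 0) a (pd 0 w p) (pd 0 (pd 0 w) p) (g p) (Af x0 ψ p)
    h.pos.ne' ha hA rfl (pv x0 ψ p) _ rfl rfl hg

lemma analyticAt_pull {c : ℝ → (Fin n → ℝ) → ℝ}
    (hψ : AnalyticAt ℝ ψ x0)
    (hc : AnalyticAt ℝ (fun p : ℝ × (Fin n → ℝ) => c p.1 p.2) (ψ x0, x0)) :
    AnalyticAt ℝ (fun p => c (Tp x0 ψ p) (Xp x0 p)) 0 := by
  have h1 : AnalyticAt ℝ (fun p => (Tp x0 ψ p, Xp x0 p)) 0 :=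
    (analyticAt_Tp (by rwa [Xp_zero])).prod (analyticAt_Xp x0 0)
  have h2 : (Tp x0 ψ 0, Xp x0 0) = (ψ x0, x0) := by simp [Tp, Xp_zero]
  exact AnalyticAt.comp (g := fun p : ℝ × (Fin n → ℝ) => c p.1 p.2)
    (f := fun p => (Tp x0 ψ p, Xp x0 p)) (by rw [h2]; exact hc) h1

end

end FuchsianCK8

open Real Filter

section FuchsianCK9

variable {n : ℕ} {U : Set (ℝ × (Fin n → ℝ))}
    {f₂ f₁ f₀ : ℝ → (Fin n → ℝ) → ℝ → (Fin n → ℝ) → ℝ}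
    {ψ : (Fin n → ℝ) → ℝ} {a : ℝ} {x0 : Fin n → ℝ}

lemma analyticAt_pv (hψ : AnalyticAt ℝ ψ x0) (j : Fin (n + 1)) :
    AnalyticAt ℝ (fun p => pv x0 ψ p j) 0 := by
  refine Fin.cases ?_ (fun i => ?_) j
  · simpa [pv] using analyticAt_const
  · simpa [pv] using analyticAt_gp (x0 := x0) (ψ := ψ) (p := 0) (by rwa [Xp_zero]) i

lemma analyticAt_Af (hψ : AnalyticAt ℝ ψ x0) : AnalyticAt ℝ (Af x0 ψ) 0 := by
  unfold Af
  refine analyticAt_const.sub (Finset.analyticAt_fun_sum _ fun i _ => ?_)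
  exact (analyticAt_gp (x0 := x0) (ψ := ψ) (p := 0) (by rwa [Xp_zero]) i).pow 2

lemma tendsto_Xp : Tendsto (Xp x0) (nhds 0) (nhds x0) := by
  have := (analyticAt_Xp x0 0).continuousAt.tendsto
  rwa [Xp_zero] at this

lemma tendsto_TX (hψ : AnalyticAt ℝ ψ x0) :
    Tendsto (fun p => (Tp x0 ψ p, Xp x0 p)) (nhds 0) (nhds (ψ x0, x0)) := by
  have h1 : AnalyticAt ℝ (fun p => (Tp x0 ψ p, Xp x0 p)) 0 :=
    (analyticAt_Tp (by rwa [Xp_zero])).prod (analyticAt_Xp x0 0)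
  have h2 : (Tp x0 ψ 0, Xp x0 0) = (ψ x0, x0) := by simp [Tp, Xp_zero]
  have := h1.continuousAt.tendsto
  rwa [h2] at this

lemma D_nhds (hU : IsOpen U) (hψ : AnalyticOnNhd ℝ ψ {x | (ψ x, x) ∈ U}) (hx : (ψ x0, x0) ∈ U) :
    ∀ᶠ x in nhds x0, (ψ x, x) ∈ U := by
  have h1 : ContinuousAt (fun x => (ψ x, x)) x0 := (hψ x0 hx).continuousAt.prodMk continuousAt_id
  exact h1.eventually_mem (hU.mem_nhds hx)

lemma local_key (hU : IsOpen U)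
    (hf₂ : HomogPoly 2 U f₂) (hf₁ : HomogPoly 1 U f₁) (hf₀ : HomogPoly 0 U f₀)
    (hψ : AnalyticOnNhd ℝ ψ {x | (ψ x, x) ∈ U}) (ha : a ≠ 0)
    (hcond : ∀ x, (ψ x, x) ∈ U →
      1 - ∑ i, gradp ψ x i ^ 2 ≠ 0 ∧
      1 - ∑ i, gradp ψ x i ^ 2 = a * f₂ (ψ x) x (-1) (gradp ψ x)) (hx : (ψ x0, x0) ∈ U) :
    ∃ c : (Fin (n + 1) → ℝ) → Co ℝ n, CoAn c ∧
      ∀ (v : ℝ → (Fin n → ℝ) → ℝ) (w : (Fin (n + 1) → ℝ) → ℝ), AnalyticAt ℝ w 0 →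
        (∀ᶠ p in nhds 0, v (Tp x0 ψ p) (Xp x0 p) = w p) →
        ∀ᶠ p in nhds 0, 0 < p 0 →
          (WaveAt f₂ f₁ f₀ (fun t x => -a * Real.log (t - ψ x) + v t x) (Tp x0 ψ p) (Xp x0 p) ↔
            Eqn c w p) := by
  obtain ⟨c2, hc2, h2⟩ := homog2 hf₂
  obtain ⟨c1, hc1, h1⟩ := homog1 hf₁
  obtain ⟨c0, hc0, h0⟩ := homog0 hf₀
  have hψ0 : AnalyticAt ℝ ψ x0 := hψ x0 hx
  have hD := tendsto_Xp.eventually (D_nhds hU hψ hx)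
  have hAf := analyticAt_Af hψ0
  have hA0 : ∀ p, (ψ (Xp x0 p), Xp x0 p) ∈ U → Af x0 ψ p ≠ 0 := fun p hp => (hcond _ hp).1
  have hpv := analyticAt_pv hψ0
  have hgp := fun i => analyticAt_gp (x0 := x0) (ψ := ψ) (p := 0) (by rwa [Xp_zero]) i
  have hq : AnalyticAt ℝ (fun p => ∑ j, ∑ k, c2 j k (Tp x0 ψ p) (Xp x0 p) *
      (pv x0 ψ p j * pv x0 ψ p k) - Af x0 ψ p / a) 0 := by
    refine AnalyticAt.sub (Finset.analyticAt_fun_sum _ fun j _ =>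
      Finset.analyticAt_fun_sum _ fun k _ => ?_) (hAf.div analyticAt_const ha)
    exact (analyticAt_pull hψ0 (hc2 j k _ hx)).mul ((hpv j).mul (hpv k))
  obtain ⟨g, hg, hgq⟩ := div_s hq (by
    filter_upwards [hD] with p hp
    have e1 : Tp x0 ψ (Function.update p 0 0) = ψ (Xp x0 p) := by simp [Tp, Xp_update0]
    have e2 : pv x0 ψ (Function.update p 0 0) = Fin.cons (-1) (gradp ψ (Xp x0 p)) := by
      simp only [pv, gp, Xp_update0]
    have e3 : Af x0 ψ (Function.update p 0 0) = 1 - ∑ i, gradp ψ (Xp x0 p) i ^ 2 := by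
      simp only [Af, gp, Xp_update0]
    rw [e1, e2, e3, (hcond _ hp).2, Xp_update0, h2, mul_div_cancel_left₀ _ ha, sub_self])
  refine ⟨coef x0 ψ a c2 c1 c0 g, ?_, ?_⟩
  · constructor <;> simp only [coef]
    · exact hAf.inv (hA0 0 (by rwa [Xp_zero]))
    · exact analyticAt_const
    · exact Finset.analyticAt_fun_sum _ fun i _ => analyticAt_pd (hgp i) i.succ
    · exact hAf.div analyticAt_const ha
    · exact hg
    · exact Finset.analyticAt_fun_sum _ fun j _ =>
        (analyticAt_pull hψ0 (hc1 j _ hx)).mul (hpv j)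
    · exact analyticAt_pull hψ0 (hc0 _ hx)
    · exact fun i => hgp i
    · exact fun j => Finset.analyticAt_fun_sum _ fun k _ =>
        ((analyticAt_pull hψ0 (hc2 _ _ _ hx)).add (analyticAt_pull hψ0 (hc2 _ _ _ hx))).mul (hpv k)
    · exact fun j => analyticAt_pull hψ0 (hc1 _ _ hx)
    · exact fun j k => analyticAt_pull hψ0 (hc2 _ _ _ hx)
  · intro v w hw hv
    have hs : ∀ᶠ p in nhds 0, ∀ i : Fin n, pd 0 (pd i.succ w) p = pd i.succ (pd 0 w) p :=
      eventually_all.2 fun i => pd_comm hw 0 i.succ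
    filter_upwards [hD, hgq, hs, hw.eventually_analyticAt, eventually_eventually_nhds.2 hv]
      with p hp hgp' hsp hwp hvp hpos
    refine wave_iff ha h2 h1 h0 ⟨hwp, hψ _ hp, hvp, hpos⟩ (hA0 p hp) hsp ?_
    linarith

lemma local_sol (hU : IsOpen U)
    (hf₂ : HomogPoly 2 U f₂) (hf₁ : HomogPoly 1 U f₁) (hf₀ : HomogPoly 0 U f₀)
    (hψ : AnalyticOnNhd ℝ ψ {x | (ψ x, x) ∈ U}) (ha : a ≠ 0)
    (hcond : ∀ x, (ψ x, x) ∈ U →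
      1 - ∑ i, gradp ψ x i ^ 2 ≠ 0 ∧
      1 - ∑ i, gradp ψ x i ^ 2 = a * f₂ (ψ x) x (-1) (gradp ψ x)) (hx : (ψ x0, x0) ∈ U)
    {v₀ : (Fin n → ℝ) → ℝ} (hv₀ : AnalyticOnNhd ℝ v₀ {x | (ψ x, x) ∈ U}) :
    ∃ v : ℝ → (Fin n → ℝ) → ℝ, ∀ᶠ p in nhds (0 : Fin (n + 1) → ℝ),
      (Tp x0 ψ p, Xp x0 p) ∈ U ∧ (ψ (Xp x0 p), Xp x0 p) ∈ U ∧
      AnalyticAt ℝ (fun q : ℝ × (Fin n → ℝ) => v q.1 q.2) (Tp x0 ψ p, Xp x0 p) ∧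
      v (ψ (Xp x0 p)) (Xp x0 p) = v₀ (Xp x0 p) ∧
      (0 < p 0 → WaveAt f₂ f₁ f₀ (fun t x => -a * Real.log (t - ψ x) + v t x)
        (Tp x0 ψ p) (Xp x0 p)) := by
  obtain ⟨c, hc, hcw⟩ := local_key hU hf₂ hf₁ hf₀ hψ ha hcond hx
  have hw0 : AnalyticAt ℝ (fun p => v₀ (Xp x0 p)) 0 :=
    AnalyticAt.comp (g := v₀) (f := Xp x0) (by rw [Xp_zero]; exact hv₀ _ hx) (analyticAt_Xp x0 0)
  obtain ⟨w, hw, htr, heq⟩ := local_exists hc hw0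
  have hv : ∀ p, (fun t x => w (Sc x0 ψ t x)) (Tp x0 ψ p) (Xp x0 p) = w p := fun p => by
    simp only [Sc_Tp]
  refine ⟨fun t x => w (Sc x0 ψ t x), ?_⟩
  filter_upwards [(tendsto_TX (hψ _ hx)).eventually (hU.mem_nhds hx),
    tendsto_Xp.eventually (D_nhds hU hψ hx), htr, heq, hw.eventually_analyticAt,
    hcw (fun t x => w (Sc x0 ψ t x)) w hw (Eventually.of_forall hv)] with p h1 h2 h3 h4 h5 h6
  refine ⟨h1, h2, ?_, ?_, fun hp => (h6 hp).2 h4⟩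
  · refine AnalyticAt.comp (g := w) (f := fun q : ℝ × (Fin n → ℝ) => Sc x0 ψ q.1 q.2)
      (by simp only [Sc_Tp]; exact h5) ?_
    refine AnalyticAt.pi fun i => ?_
    refine Fin.cases ?_ (fun i => ?_) i
    · simp only [Sc, Fin.cons_zero]
      exact analyticAt_fst.sub (AnalyticAt.comp (g := ψ) (f := fun q : ℝ × (Fin n → ℝ) => q.2)
        (hψ _ h2) analyticAt_snd)
    · simp only [Sc, Fin.cons_succ]
      refine AnalyticAt.sub ?_ analyticAt_const
      exact AnalyticAt.comp (g := fun x : Fin n → ℝ => x i) (f := fun q : ℝ × (Fin n → ℝ) => q.2)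
        (analyticAt_coord i _) analyticAt_snd
  · have e : Sc x0 ψ (ψ (Xp x0 p)) (Xp x0 p) = Function.update p 0 0 := by
      have := Sc_Tp x0 ψ (Function.update p 0 0)
      rw [Xp_update0] at this
      rw [← this]; congr 1
      simp [Tp, Xp_update0]
    show w _ = _
    rw [e, h3, Xp_update0]

lemma local_uniq (hU : IsOpen U)
    (hf₂ : HomogPoly 2 U f₂) (hf₁ : HomogPoly 1 U f₁) (hf₀ : HomogPoly 0 U f₀)
    (hψ : AnalyticOnNhd ℝ ψ {x | (ψ x, x) ∈ U}) (ha : a ≠ 0)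
    (hcond : ∀ x, (ψ x, x) ∈ U →
      1 - ∑ i, gradp ψ x i ^ 2 ≠ 0 ∧
      1 - ∑ i, gradp ψ x i ^ 2 = a * f₂ (ψ x) x (-1) (gradp ψ x)) (hx : (ψ x0, x0) ∈ U)
    {v v' : ℝ → (Fin n → ℝ) → ℝ}
    (hv : AnalyticAt ℝ (fun q : ℝ × (Fin n → ℝ) => v q.1 q.2) (ψ x0, x0))
    (hv' : AnalyticAt ℝ (fun q : ℝ × (Fin n → ℝ) => v' q.1 q.2) (ψ x0, x0))
    (htr : ∀ᶠ x in nhds x0, v (ψ x) x = v' (ψ x) x)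
    (hs : ∀ᶠ q : ℝ × (Fin n → ℝ) in nhds (ψ x0, x0), ψ q.2 < q.1 →
      WaveAt f₂ f₁ f₀ (fun t x => -a * Real.log (t - ψ x) + v t x) q.1 q.2)
    (hs' : ∀ᶠ q : ℝ × (Fin n → ℝ) in nhds (ψ x0, x0), ψ q.2 < q.1 →
      WaveAt f₂ f₁ f₀ (fun t x => -a * Real.log (t - ψ x) + v' t x) q.1 q.2) :
    ∀ᶠ q : ℝ × (Fin n → ℝ) in nhds (ψ x0, x0), v q.1 q.2 = v' q.1 q.2 := by
  obtain ⟨c, hc, hcw⟩ := local_key hU hf₂ hf₁ hf₀ hψ ha hcond hx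
  have hψ0 := hψ _ hx
  have key : ∀ {v : ℝ → (Fin n → ℝ) → ℝ}
      (hv : AnalyticAt ℝ (fun q : ℝ × (Fin n → ℝ) => v q.1 q.2) (ψ x0, x0))
      (hs : ∀ᶠ q : ℝ × (Fin n → ℝ) in nhds (ψ x0, x0), ψ q.2 < q.1 →
        WaveAt f₂ f₁ f₀ (fun t x => -a * Real.log (t - ψ x) + v t x) q.1 q.2),
      ∀ᶠ p in nhds 0, 0 < p 0 → Eqn c (fun p => v (Tp x0 ψ p) (Xp x0 p)) p := by
    intro v hv hs
    filter_upwards [hcw v _ (analyticAt_pull hψ0 hv) (Eventually.of_forall fun _ => rfl),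
      (tendsto_TX hψ0).eventually hs] with p h1 h2 hp
    exact (h1 hp).1 (h2 (by simp [Tp, hp]))
  have := local_unique hc (analyticAt_pull hψ0 hv) (analyticAt_pull hψ0 hv') (by
    filter_upwards [tendsto_Xp.eventually htr] with p hp
    simpa [Tp, Xp_update0] using hp) (key hv hs) (key hv' hs')
  have hc : Tendsto (fun q : ℝ × (Fin n → ℝ) => Sc x0 ψ q.1 q.2) (nhds (ψ x0, x0)) (nhds 0) := by
    rw [tendsto_pi_nhds]
    intro i
    have h2 : Tendsto (fun q : ℝ × (Fin n → ℝ) => q.2) (nhds (ψ x0, x0)) (nhds x0) :=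
      continuousAt_snd.tendsto
    refine Fin.cases ?_ (fun i => ?_) i
    · have h1 : Tendsto (fun q : ℝ × (Fin n → ℝ) => q.1) (nhds (ψ x0, x0)) (nhds (ψ x0)) :=
        continuousAt_fst.tendsto
      simpa [Sc] using h1.sub (hψ0.continuousAt.tendsto.comp h2)
    · simpa [Sc] using ((tendsto_pi_nhds.1 h2) i).sub_const (x0 i)
  filter_upwards [hc.eventually this] with q hq
  simpa only [Tp_Sc, Xp_Sc] using hq

end FuchsianCK9

open Real Filter

section FuchsianCK10

variable {n : ℕ} {U : Set (ℝ × (Fin n → ℝ))}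
    {f₂ f₁ f₀ : ℝ → (Fin n → ℝ) → ℝ → (Fin n → ℝ) → ℝ}
    {ψ : (Fin n → ℝ) → ℝ} {a : ℝ} {x0 : Fin n → ℝ}

def box (ψ : (Fin n → ℝ) → ℝ) (x0 : Fin n → ℝ) (r : ℝ) : Set (ℝ × (Fin n → ℝ)) :=
  {q | |q.1 - ψ q.2| < r ∧ q.2 ∈ Metric.ball x0 r}

lemma Sc_mem {r : ℝ} (hr : 0 < r) {q : ℝ × (Fin n → ℝ)} (hq : q ∈ box ψ x0 r) :
    Sc x0 ψ q.1 q.2 ∈ Metric.ball (0 : Fin (n + 1) → ℝ) r := by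
  rw [mem_ball_zero_iff, pi_norm_lt_iff hr]
  intro i
  refine Fin.cases ?_ (fun i => ?_) i
  · simpa [Sc] using hq.1
  · have h := hq.2
    rw [mem_ball_iff_norm, pi_norm_lt_iff hr] at h
    simpa [Sc] using h i

lemma box_open {r : ℝ} (h : ∀ x ∈ Metric.ball x0 r, ContinuousAt ψ x) : IsOpen (box ψ x0 r) := by
  rw [isOpen_iff_mem_nhds]
  rintro ⟨t, x⟩ ⟨h1, h2⟩
  have e2 : Tendsto (fun q : ℝ × (Fin n → ℝ) => q.2) (nhds (t, x)) (nhds x) :=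
    continuousAt_snd.tendsto
  have c : ContinuousAt (fun q : ℝ × (Fin n → ℝ) => |q.1 - ψ q.2|) (t, x) := by
    have : ContinuousAt (fun q : ℝ × (Fin n → ℝ) => ψ q.2) (t, x) :=
      ContinuousAt.comp (g := ψ) (h x h2) continuousAt_snd
    exact (continuousAt_fst.sub this).abs
  exact (c.tendsto.eventually (gt_mem_nhds h1)).and (e2.eventually (Metric.isOpen_ball.mem_nhds h2))

lemma box_sol (hU : IsOpen U)
    (hf₂ : HomogPoly 2 U f₂) (hf₁ : HomogPoly 1 U f₁) (hf₀ : HomogPoly 0 U f₀)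
    (hψ : AnalyticOnNhd ℝ ψ {x | (ψ x, x) ∈ U}) (ha : a ≠ 0)
    (hcond : ∀ x, (ψ x, x) ∈ U →
      1 - ∑ i, gradp ψ x i ^ 2 ≠ 0 ∧
      1 - ∑ i, gradp ψ x i ^ 2 = a * f₂ (ψ x) x (-1) (gradp ψ x)) (hx : (ψ x0, x0) ∈ U)
    {v₀ : (Fin n → ℝ) → ℝ} (hv₀ : AnalyticOnNhd ℝ v₀ {x | (ψ x, x) ∈ U}) :
    ∃ (v : ℝ → (Fin n → ℝ) → ℝ) (r : ℝ), 0 < r ∧ IsOpen (box ψ x0 r) ∧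
      ∀ q ∈ box ψ x0 r, q ∈ U ∧ (ψ q.2, q.2) ∈ U ∧
      AnalyticAt ℝ (fun q : ℝ × (Fin n → ℝ) => v q.1 q.2) q ∧
      v (ψ q.2) q.2 = v₀ q.2 ∧
      (ψ q.2 < q.1 → WaveAt f₂ f₁ f₀ (fun t x => -a * Real.log (t - ψ x) + v t x) q.1 q.2) := by
  obtain ⟨v, hv⟩ := local_sol hU hf₂ hf₁ hf₀ hψ ha hcond hx hv₀
  obtain ⟨r, hr, hb⟩ := Metric.eventually_nhds_iff_ball.1 hv
  have key : ∀ q ∈ box ψ x0 r, q ∈ U ∧ (ψ q.2, q.2) ∈ U ∧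
      AnalyticAt ℝ (fun q : ℝ × (Fin n → ℝ) => v q.1 q.2) q ∧
      v (ψ q.2) q.2 = v₀ q.2 ∧
      (ψ q.2 < q.1 → WaveAt f₂ f₁ f₀ (fun t x => -a * Real.log (t - ψ x) + v t x) q.1 q.2) := by
    intro q hq
    have := hb _ (Sc_mem hr hq)
    simp only [Tp_Sc, Xp_Sc] at this
    obtain ⟨h1, h2, h3, h4, h5⟩ := this
    exact ⟨h1, h2, h3, h4, fun h => h5 (by simpa [Sc] using h)⟩
  refine ⟨v, r, hr, box_open fun x hxr => ?_, key⟩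
  exact (hψ x (key (ψ x, x) ⟨by simpa using hr, hxr⟩).2.1).continuousAt

lemma ptd_congr {u u' : ℝ → (Fin n → ℝ) → ℝ} {O : Set (ℝ × (Fin n → ℝ))} (hO : IsOpen O)
    (h : ∀ q ∈ O, u q.1 q.2 = u' q.1 q.2) : ∀ q ∈ O, ptd u q.1 q.2 = ptd u' q.1 q.2 := by
  rintro ⟨t, x⟩ hq
  refine Filter.EventuallyEq.deriv_eq ?_
  have c : ContinuousAt (fun s : ℝ => (s, x)) t := by fun_prop
  filter_upwards [c.eventually_mem (hO.mem_nhds hq)] with s hs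
  exact h _ hs

lemma pxd_congr {u u' : ℝ → (Fin n → ℝ) → ℝ} {O : Set (ℝ × (Fin n → ℝ))} (hO : IsOpen O)
    (h : ∀ q ∈ O, u q.1 q.2 = u' q.1 q.2) (i : Fin n) :
    ∀ q ∈ O, pxd i u q.1 q.2 = pxd i u' q.1 q.2 := by
  rintro ⟨t, x⟩ hq
  refine Filter.EventuallyEq.deriv_eq ?_
  have c : ContinuousAt (fun y : ℝ => (t, Function.update x i y)) (x i) := by fun_prop
  have hq' : O ∈ nhds (t, Function.update x i (x i)) := by
    rw [Function.update_eq_self]; exact hO.mem_nhds hq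
  filter_upwards [c.eventually_mem hq'] with s hs
  exact h _ hs

lemma wave_congr {u u' : ℝ → (Fin n → ℝ) → ℝ} {O : Set (ℝ × (Fin n → ℝ))} (hO : IsOpen O)
    (h : ∀ q ∈ O, u q.1 q.2 = u' q.1 q.2) : ∀ q ∈ O, WaveAt f₂ f₁ f₀ u q.1 q.2 →
      WaveAt f₂ f₁ f₀ u' q.1 q.2 := by
  intro q hq hw
  unfold WaveAt lapx gradx at *
  rw [← ptd_congr hO (ptd_congr hO h) q hq, ← ptd_congr hO h q hq]
  simp only [← pxd_congr hO h _ q hq, ← fun i => pxd_congr hO (pxd_congr hO h i) i q hq]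
  exact hw

end FuchsianCK10

/-- Singular solutions of nonlinear wave equations with quadratic nonlinearity,
blowing up logarithmically along the prescribed noncharacteristic hypersurface
`Σ = {t = ψ(x)}`, with prescribed trace `v₀` on `Σ` and local uniqueness. -/
theorem stmt0 {n : ℕ} (U : Set (ℝ × (Fin n → ℝ))) (hU : IsOpen U)
    (f₂ f₁ f₀ : ℝ → (Fin n → ℝ) → ℝ → (Fin n → ℝ) → ℝ)
    (hf₂ : HomogPoly 2 U f₂) (hf₁ : HomogPoly 1 U f₁) (hf₀ : HomogPoly 0 U f₀)
    (ψ : (Fin n → ℝ) → ℝ) (hψ : AnalyticOnNhd ℝ ψ {x | (ψ x, x) ∈ U})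
    (a : ℝ) (ha : a ≠ 0)
    (hcond : ∀ x, (ψ x, x) ∈ U →
      1 - ∑ i, gradp ψ x i ^ 2 ≠ 0 ∧
      1 - ∑ i, gradp ψ x i ^ 2 = a * f₂ (ψ x) x (-1) (gradp ψ x))
    (v₀ : (Fin n → ℝ) → ℝ) (hv₀ : AnalyticOnNhd ℝ v₀ {x | (ψ x, x) ∈ U}) :
    ∃ Ω : Set (ℝ × (Fin n → ℝ)), IsOpen Ω ∧ {p ∈ U | p.1 = ψ p.2} ⊆ Ω ∧ Ω ⊆ U ∧
      ∃ v : ℝ → (Fin n → ℝ) → ℝ,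
        AnalyticOnNhd ℝ (fun p : ℝ × (Fin n → ℝ) => v p.1 p.2) Ω ∧
        (∀ x, (ψ x, x) ∈ Ω → v (ψ x) x = v₀ x) ∧
        SolvesWave f₂ f₁ f₀ (fun t x => -a * Real.log (t - ψ x) + v t x)
          (Ω ∩ {p | ψ p.2 < p.1}) ∧
        ∀ (Ω' : Set (ℝ × (Fin n → ℝ))) (v' : ℝ → (Fin n → ℝ) → ℝ),
          IsOpen Ω' → {p ∈ U | p.1 = ψ p.2} ⊆ Ω' →
          AnalyticOnNhd ℝ (fun p : ℝ × (Fin n → ℝ) => v' p.1 p.2) Ω' →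
          (∀ x, (ψ x, x) ∈ Ω' → v' (ψ x) x = v₀ x) →
          SolvesWave f₂ f₁ f₀ (fun t x => -a * Real.log (t - ψ x) + v' t x)
            (Ω' ∩ {p | ψ p.2 < p.1}) →
          ∃ Ω'' : Set (ℝ × (Fin n → ℝ)), IsOpen Ω'' ∧ {p ∈ U | p.1 = ψ p.2} ⊆ Ω'' ∧
            ∀ p ∈ Ω'', v p.1 p.2 = v' p.1 p.2 := by
  classical
  have hex : ∀ z : {x | (ψ x, x) ∈ U}, _ := fun z =>
    box_sol hU hf₂ hf₁ hf₀ hψ ha hcond (x0 := z.1) z.2 hv₀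
  choose V r hr hbo hb using hex
  -- two local solutions agree on overlaps
  have uniq : ∀ (Ω₁ Ω₂ : Set (ℝ × (Fin n → ℝ))) (v v' : ℝ → (Fin n → ℝ) → ℝ) (x : Fin n → ℝ),
      IsOpen Ω₁ → IsOpen Ω₂ → (ψ x, x) ∈ Ω₁ → (ψ x, x) ∈ Ω₂ → (ψ x, x) ∈ U →
      AnalyticOnNhd ℝ (fun p : ℝ × (Fin n → ℝ) => v p.1 p.2) Ω₁ →
      AnalyticOnNhd ℝ (fun p : ℝ × (Fin n → ℝ) => v' p.1 p.2) Ω₂ →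
      (∀ x, (ψ x, x) ∈ Ω₁ → v (ψ x) x = v₀ x) →
      (∀ x, (ψ x, x) ∈ Ω₂ → v' (ψ x) x = v₀ x) →
      (∀ q ∈ Ω₁, ψ q.2 < q.1 →
        WaveAt f₂ f₁ f₀ (fun t x => -a * Real.log (t - ψ x) + v t x) q.1 q.2) →
      (∀ q ∈ Ω₂, ψ q.2 < q.1 →
        WaveAt f₂ f₁ f₀ (fun t x => -a * Real.log (t - ψ x) + v' t x) q.1 q.2) →
      ∀ᶠ q : ℝ × (Fin n → ℝ) in nhds (ψ x, x), v q.1 q.2 = v' q.1 q.2 := by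
    intro Ω₁ Ω₂ v v' x o1 o2 m1 m2 hx a1 a2 t1 t2 w1 w2
    have c : ContinuousAt (fun x => (ψ x, x)) x := (hψ x hx).continuousAt.prodMk continuousAt_id
    refine local_uniq hU hf₂ hf₁ hf₀ hψ ha hcond hx (a1 _ m1) (a2 _ m2) ?_ ?_ ?_
    · filter_upwards [c.eventually_mem (o1.mem_nhds m1), c.eventually_mem (o2.mem_nhds m2)]
        with y h1 h2
      rw [t1 y h1, t2 y h2]
    · filter_upwards [o1.mem_nhds m1] with q hq using w1 q hq
    · filter_upwards [o2.mem_nhds m2] with q hq using w2 q hq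
  have agree : ∀ z z' q, q ∈ box ψ z.1 (r z) → q ∈ box ψ z'.1 (r z') →
      V z q.1 q.2 = V z' q.1 q.2 := by
    rintro z z' ⟨t, x⟩ h h'
    have m1 : (ψ x, x) ∈ box ψ z.1 (r z) := ⟨by simpa using hr z, h.2⟩
    have m2 : (ψ x, x) ∈ box ψ z'.1 (r z') := ⟨by simpa using hr z', h'.2⟩
    have hev := uniq _ _ (V z) (V z') x (hbo z) (hbo z') m1 m2 (hb z _ m1).2.1
      (fun q hq => (hb z q hq).2.2.1) (fun q hq => (hb z' q hq).2.2.1)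
      (fun y hy => (hb z _ hy).2.2.2.1) (fun y hy => (hb z' _ hy).2.2.2.1)
      (fun q hq => (hb z q hq).2.2.2.2) (fun q hq => (hb z' q hq).2.2.2.2)
    set m := min (r z) (r z') with hm
    set S : Set (ℝ × (Fin n → ℝ)) := (fun s => (s, x)) '' Metric.ball (ψ x) m with hS
    have hpre : IsPreconnected S :=
      (convex_ball (ψ x) m).isPreconnected.image _ (by fun_prop)
    have sub1 : S ⊆ box ψ z.1 (r z) := by
      rintro _ ⟨s, hs, rfl⟩
      rw [Metric.mem_ball, Real.dist_eq] at hs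
      exact ⟨lt_of_lt_of_le hs (min_le_left _ _), h.2⟩
    have sub2 : S ⊆ box ψ z'.1 (r z') := by
      rintro _ ⟨s, hs, rfl⟩
      rw [Metric.mem_ball, Real.dist_eq] at hs
      exact ⟨lt_of_lt_of_le hs (min_le_right _ _), h'.2⟩
    have := AnalyticOnNhd.eqOn_of_preconnected_of_eventuallyEq
      (f := fun q : ℝ × (Fin n → ℝ) => V z q.1 q.2) (g := fun q : ℝ × (Fin n → ℝ) => V z' q.1 q.2)
      (U := S) (z₀ := (ψ x, x)) (fun q hq => (hb z q (sub1 hq)).2.2.1)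
      (fun q hq => (hb z' q (sub2 hq)).2.2.1) hpre
      ⟨ψ x, Metric.mem_ball_self (lt_min (hr z) (hr z')), rfl⟩ hev
    exact this ⟨t, by simpa [Real.dist_eq, hm] using ⟨h.1, h'.1⟩, rfl⟩
  let v : ℝ → (Fin n → ℝ) → ℝ := fun t x =>
    if h : ∃ z, (t, x) ∈ box ψ z.1 (r z) then V h.choose t x else 0
  have hv : ∀ z, ∀ q ∈ box ψ z.1 (r z), V z q.1 q.2 = v q.1 q.2 := by
    intro z q hq
    have h : ∃ z, (q.1, q.2) ∈ box ψ (z : {x | (ψ x, x) ∈ U}).1 (r z) := ⟨z, hq⟩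
    simp only [v]
    rw [dif_pos h]
    exact agree z _ q hq h.choose_spec
  let Ω : Set (ℝ × (Fin n → ℝ)) := ⋃ z, box ψ z.1 (r z)
  have hΩo : IsOpen Ω := isOpen_iUnion hbo
  have hΩs : {p ∈ U | p.1 = ψ p.2} ⊆ Ω := by
    rintro ⟨t, x⟩ ⟨h1, h2⟩
    simp only at h2
    subst h2
    exact Set.mem_iUnion.2 ⟨⟨x, h1⟩, by simpa using hr _, Metric.mem_ball_self (hr _)⟩
  have hΩa : AnalyticOnNhd ℝ (fun p : ℝ × (Fin n → ℝ) => v p.1 p.2) Ω := by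
    intro q hq
    obtain ⟨z, hz⟩ := Set.mem_iUnion.1 hq
    refine (hb z q hz).2.2.1.congr ?_
    filter_upwards [(hbo z).mem_nhds hz] with y hy using hv z y hy
  have hΩt : ∀ x, (ψ x, x) ∈ Ω → v (ψ x) x = v₀ x := by
    intro x hx
    obtain ⟨z, hz⟩ := Set.mem_iUnion.1 hx
    rw [← hv z _ hz]
    exact (hb z _ hz).2.2.2.1
  have hΩw : ∀ q ∈ Ω, ψ q.2 < q.1 →
      WaveAt f₂ f₁ f₀ (fun t x => -a * Real.log (t - ψ x) + v t x) q.1 q.2 := by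
    intro q hq hlt
    obtain ⟨z, hz⟩ := Set.mem_iUnion.1 hq
    refine wave_congr (hbo z) (fun y hy => ?_) q hz ((hb z q hz).2.2.2.2 hlt)
    simp only [hv z y hy]
  refine ⟨Ω, hΩo, hΩs, ?_, v, hΩa, hΩt, fun t x h => hΩw (t, x) h.1 h.2, ?_⟩
  · intro q hq
    obtain ⟨z, hz⟩ := Set.mem_iUnion.1 hq
    exact (hb z q hz).1
  · intro Ω' v' ho' hs' ha' ht' hw'
    refine ⟨{q | ∀ᶠ y : ℝ × (Fin n → ℝ) in nhds q, v y.1 y.2 = v' y.1 y.2},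
      isOpen_setOfPred_eventually_nhds, ?_, fun p hp => hp.self_of_nhds⟩
    rintro ⟨t, x⟩ ⟨h1, h2⟩
    simp only at h2
    subst h2
    exact uniq Ω Ω' v v' x hΩo ho' (hΩs ⟨h1, rfl⟩) (hs' ⟨h1, rfl⟩) h1 hΩa ha' hΩt ht' hΩw
      (fun q hq hlt => hw' q.1 q.2 ⟨hq, hlt⟩)
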